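/- arXiv:math/0011060 — 4 statements merged into one kernel-verified Lean document; each statement's English description precedes it below -/
import Mathlib

section
/- Let A be a skew-symmetric n×n real matrix and for S ⊆ {1,…,n} let p(S) be the Pfaffian of the principal minor of A indexed by S. If I₁, I₂ ⊆ {1,…,n} and I₁ Δ I₂ = {i₁ < i₂ < … < i_l}, then Σ_{j=1}^l (−1)^j · p(I₁ Δ {i_j}) · p(I₂ Δ {i_j}) = 0. -/
/-- The Pfaffian of an `N × N` matrix (intended for skew-symmetric matrices):
`Pf(A) = ∑_{σ ∈ S'_N} sign(σ) ∏_{k=1}^{N/2} a_{σ(2k-1) σ(2k)}`, where `S'_N` is the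
set of permutations `σ` of `{0, …, N-1}` such that `σ(2k)` is minimal among
`σ(2k), σ(2k+1), …, σ(N-1)` for each `k`.  It is `0` for odd `N` and `1` for `N = 0`. -/
noncomputable def pfaffian {N : ℕ} (A : Matrix (Fin N) (Fin N) ℝ) : ℝ :=
  if h : 2 ∣ N then
    ∑ σ ∈ Finset.univ.filter
        (fun σ : Equiv.Perm (Fin N) =>
          ∀ p q : Fin N, 2 ∣ (p : ℕ) → p ≤ q → σ p ≤ σ q),
      ((Equiv.Perm.sign σ : ℤ) : ℝ) *
        ∏ k : Fin (N / 2),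
          A (σ ⟨2 * (k : ℕ), by have := k.2; omega⟩)
            (σ ⟨2 * (k : ℕ) + 1, by have := k.2; omega⟩)
  else 0

/-- The Pfaffian of the principal minor of `A` indexed by the subset `S`,
with rows and columns of the minor taken in increasing order of index. -/
noncomputable def pfMinor {n : ℕ} (A : Matrix (Fin n) (Fin n) ℝ) (S : Finset (Fin n)) : ℝ :=
  pfaffian (Matrix.of fun p q : Fin S.card =>
    A ((S.orderIsoOfFin rfl p : S) : Fin n) ((S.orderIsoOfFin rfl q : S) : Fin n))


namespace PfEx

/-- the elementary sign -/
noncomputable def ep {n : ℕ} (k j : Fin n) : ℝ := if k < j then -1 else 1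

/-- the positional sign -/
noncomputable def sg {n : ℕ} (S : Finset (Fin n)) (j : Fin n) : ℝ := ∏ k ∈ S, ep k j

lemma ep_mul_self {n : ℕ} (k j : Fin n) : ep k j * ep k j = 1 := by
  unfold ep; split_ifs <;> norm_num

lemma ep_self {n : ℕ} (k : Fin n) : ep k k = 1 := by simp [ep]

lemma ep_swap {n : ℕ} {k j : Fin n} (h : k ≠ j) : ep k j = - ep j k := by
  unfold ep
  rcases lt_or_gt_of_ne h with h | h
  · simp [h, h.not_gt]
  · simp [h, h.not_gt]

lemma sg_mul_self {n : ℕ} (S : Finset (Fin n)) (j : Fin n) : sg S j * sg S j = 1 := by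
  unfold sg
  rw [← Finset.prod_mul_distrib]
  exact Finset.prod_eq_one fun k _ => ep_mul_self k j

lemma sg_insert {n : ℕ} {S : Finset (Fin n)} {m : Fin n} (hm : m ∉ S) (j : Fin n) :
    sg (insert m S) j = ep m j * sg S j := Finset.prod_insert hm

lemma sg_erase {n : ℕ} {S : Finset (Fin n)} {m : Fin n} (hm : m ∈ S) (j : Fin n) :
    sg (S.erase m) j = ep m j * sg S j := by
  have h : sg S j = ep m j * sg (S.erase m) j := (Finset.mul_prod_erase S _ hm).symm
  rw [h, ← mul_assoc, ep_mul_self, one_mul]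

lemma sg_one {n : ℕ} {S : Finset (Fin n)} {j : Fin n} (h : ∀ k ∈ S, j ≤ k) : sg S j = 1 :=
  Finset.prod_eq_one fun k hk => by simp [ep, (h k hk).not_gt]

lemma sg_symmDiff {n : ℕ} (S T : Finset (Fin n)) (j : Fin n) :
    sg (symmDiff S T) j = sg S j * sg T j := by
  have h1 : sg (symmDiff S T) j = sg (S \ T) j * sg (T \ S) j :=
    Finset.prod_union disjoint_sdiff_sdiff
  have h2 : sg S j = sg (S \ T) j * sg (S ∩ T) j := by
    unfold sg; rw [mul_comm, Finset.prod_inter_mul_prod_sdiff]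
  have h3 : sg T j = sg (T \ S) j * sg (S ∩ T) j := by
    unfold sg; rw [mul_comm, Finset.inter_comm, Finset.prod_inter_mul_prod_sdiff]
  have := sg_mul_self (S ∩ T) j
  rw [h1, h2, h3]
  linear_combination (-(sg (S \ T) j * sg (T \ S) j)) * this

lemma sg_emb {n N : ℕ} {e : Fin N → Fin n} (he : StrictMono e) (j : Fin N) :
    sg (Finset.univ.image e) (e j) = (-1) ^ (j : ℕ) := by
  unfold sg
  rw [Finset.prod_image fun a _ b _ h => he.injective h]
  simp only [ep, he.lt_iff_lt]
  rw [Finset.prod_ite]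
  simp only [Finset.prod_const, one_pow, mul_one]
  congr 1
  have : (Finset.univ.filter fun x : Fin N => x < j) = Finset.Iio j := by ext; simp
  rw [this, Fin.card_Iio]

/-- the contraction sum -/
noncomputable def DD {n : ℕ} (A : Matrix (Fin n) (Fin n) ℝ) (P : Finset (Fin n) → ℝ)
    (S : Finset (Fin n)) (i : Fin n) : ℝ :=
  ∑ j ∈ S, sg S j * A i j * P (S.erase j)

lemma key {n : ℕ} (A : Matrix (Fin n) (Fin n) ℝ) (hA : ∀ i j, A i j = - A j i)
    (P : Finset (Fin n) → ℝ)
    (hP : ∀ m S, (∀ k ∈ S, m < k) → P (insert m S) = DD A P S m) :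
    ∀ (N : ℕ) (S : Finset (Fin n)) (i : Fin n), S.card ≤ N →
      DD A P S i = if i ∈ S then 0 else sg S i * P (insert i S) := by
  intro N
  induction N with
  | zero =>
    intro S i h
    obtain rfl : S = ∅ := by simpa using h
    rw [hP i ∅ (by simp)]
    simp [DD]
  | succ N ih =>
    intro S i hS
    rcases S.eq_empty_or_nonempty with rfl | hne
    · rw [hP i ∅ (by simp)]
      simp [DD]
    by_cases hlt : ∀ k ∈ S, i < k
    · rw [if_neg (fun h => lt_irrefl _ (hlt i h)), sg_one (fun k hk => (hlt k hk).le), one_mul,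
        hP i S hlt]
    obtain ⟨m, G, hmG, rfl⟩ : ∃ m G, (∀ k ∈ G, m < k) ∧ S = insert m G := by
      refine ⟨S.min' hne, S.erase (S.min' hne), fun k hk => S.min'_lt_of_mem_erase_min' hne hk, ?_⟩
      rw [Finset.insert_erase (S.min'_mem hne)]
    have hm : m ∉ G := fun h => lt_irrefl _ (hmG m h)
    have hmi : m ≤ i := by
      by_contra hc
      push Not at hc
      apply hlt
      intro k hk
      rcases Finset.mem_insert.1 hk with rfl | hk
      · exact hc
      · exact hc.trans (hmG k hk)
    have hcard : G.card ≤ N := by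
      rw [Finset.card_insert_of_notMem hm] at hS; omega
    -- expansion
    have e1 : DD A P (insert m G) i = A i m * P G
        - ∑ j ∈ G, sg G j * A i j * P (insert m (G.erase j)) := by
      unfold DD
      rw [Finset.sum_insert hm, Finset.erase_insert hm, sg_one, one_mul, sub_eq_add_neg,
        ← Finset.sum_neg_distrib]
      · congr 1
        refine Finset.sum_congr rfl fun j hj => ?_
        have : ep m j = -1 := by simp [ep, hmG j hj]
        rw [sg_insert hm, this, Finset.erase_insert_of_ne (hmG j hj).ne]
        ring
      · intro k hk
        rcases Finset.mem_insert.1 hk with rfl | hk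
        · exact le_rfl
        · exact (hmG k hk).le
    have e2 : ∑ j ∈ G, sg G j * A i j * P (insert m (G.erase j))
        = - ∑ k ∈ G, sg G k * A m k * DD A P (G.erase k) i := by
      have : ∀ j ∈ G, sg G j * A i j * P (insert m (G.erase j)) =
          ∑ k ∈ G.erase j, sg G j * A i j * (sg (G.erase j) k * A m k * P ((G.erase j).erase k)) := by
        intro j hj
        rw [hP m _ (fun k hk => hmG k (Finset.mem_of_mem_erase hk)), DD, Finset.mul_sum]
      rw [Finset.sum_congr rfl this, ← Finset.sum_neg_distrib]
      simp only [DD, Finset.mul_sum, ← Finset.sum_neg_distrib]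
      rw [Finset.sum_comm' (t' := G) (s' := fun k => G.erase k)]
      · refine Finset.sum_congr rfl fun k hk => Finset.sum_congr rfl fun j hj => ?_
        obtain ⟨hjk, hj⟩ := Finset.mem_erase.1 hj
        rw [sg_erase hj, sg_erase hk, ep_swap hjk, Finset.erase_right_comm]
        ring
      · intro x y
        simp only [Finset.mem_erase]
        tauto
    have e3 : ∀ k ∈ G, DD A P (G.erase k) i =
        if i ∈ G.erase k then 0 else sg (G.erase k) i * P (insert i (G.erase k)) :=
      fun k hk => ih _ _ ((Finset.card_erase_le).trans hcard)
    rcases hmi.eq_or_lt with rfl | hmi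
    · rw [if_pos (Finset.mem_insert_self _ _)]
      have hz : A m m = 0 := by linarith [hA m m]
      have e4 : ∑ k ∈ G, sg G k * A m k * DD A P (G.erase k) m =
          ∑ j ∈ G, sg G j * A m j * P (insert m (G.erase j)) := by
        refine Finset.sum_congr rfl fun k hk => ?_
        rw [hP m _ (fun k hk => hmG k (Finset.mem_of_mem_erase hk))]
      rw [e4] at e2
      rw [e1, hz]
      linarith
    by_cases hiG : i ∈ G
    · rw [if_pos (Finset.mem_insert_of_mem hiG), e1, e2, Finset.sum_eq_single_of_mem i hiG]
      · rw [e3 i hiG, if_neg (Finset.notMem_erase _ _), Finset.insert_erase hiG, sg_erase hiG,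
          ep_self, hA i m]
        linear_combination (A m i * P G) * sg_mul_self G i
      · intro k hk hki
        rw [e3 k hk, if_pos (Finset.mem_erase.2 ⟨hki.symm, hiG⟩), mul_zero]
    · have hi' : i ∉ insert m G := by
        simp [hiG, hmi.ne']
      rw [if_neg hi', e1, e2, Finset.insert_comm, hP m (insert i G), DD, Finset.sum_insert hiG,
        sg_insert hm, Finset.erase_insert hiG, sg_insert hiG, ep_self]
      · have hep : ep m i = -1 := by simp [ep, hmi]
        have e5 : ∑ x ∈ G, sg (insert i G) x * A m x * P ((insert i G).erase x) =
            - sg G i * ∑ k ∈ G, sg G k * A m k * DD A P (G.erase k) i := by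
          rw [Finset.mul_sum]
          refine Finset.sum_congr rfl fun k hk => ?_
          have hik : i ≠ k := fun h => hiG (h ▸ hk)
          rw [e3 k hk, if_neg (fun h => hiG (Finset.mem_of_mem_erase h)), sg_erase hk,
            sg_insert hiG, Finset.erase_insert_of_ne hik, ep_swap hik]
          linear_combination (ep k i * sg G k * A m k * P (insert i (G.erase k))) *
            sg_mul_self G i
        rw [e5, hep, hA i m]
        linear_combination (A m i * P G - ∑ k ∈ G, sg G k * A m k * DD A P (G.erase k) i) *
            sg_mul_self G i
      · intro k hk
        rcases Finset.mem_insert.1 hk with rfl | hk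
        · exact hmi
        · exact hmG k hk

lemma half {n : ℕ} (A : Matrix (Fin n) (Fin n) ℝ) (hA : ∀ i j, A i j = - A j i)
    (P : Finset (Fin n) → ℝ)
    (hP : ∀ m S, (∀ k ∈ S, m < k) → P (insert m S) = DD A P S m) (I J : Finset (Fin n)) :
    ∑ i ∈ I, ∑ j ∈ J, sg I i * sg J j * A i j * P (I.erase i) * P (J.erase j) =
    ∑ i ∈ I \ J, sg (symmDiff I J) i * P (symmDiff I {i}) * P (symmDiff J {i}) := by
  have h1 : ∀ i ∈ I, ∑ j ∈ J, sg I i * sg J j * A i j * P (I.erase i) * P (J.erase j) =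
      if i ∉ J then sg (symmDiff I J) i * P (symmDiff I {i}) * P (symmDiff J {i}) else 0 := by
    intro i hi
    have : ∑ j ∈ J, sg I i * sg J j * A i j * P (I.erase i) * P (J.erase j) =
        sg I i * P (I.erase i) * DD A P J i := by
      rw [DD, Finset.mul_sum]
      exact Finset.sum_congr rfl fun j _ => by ring
    rw [this, key A hA P hP _ J i le_rfl]
    by_cases hJ : i ∈ J
    · simp [hJ]
    · have a1 : symmDiff I {i} = I.erase i := by
        ext x; simp only [Finset.mem_symmDiff, Finset.mem_singleton, Finset.mem_erase]
        grind
      have a2 : symmDiff J {i} = insert i J := by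
        ext x; simp only [Finset.mem_symmDiff, Finset.mem_singleton, Finset.mem_insert]
        grind
      rw [if_neg hJ, if_pos hJ, a1, a2, sg_symmDiff]
      ring
  rw [Finset.sum_congr rfl h1, ← Finset.sum_filter, Finset.sdiff_eq_filter]

lemma total {n : ℕ} (A : Matrix (Fin n) (Fin n) ℝ) (hA : ∀ i j, A i j = - A j i)
    (P : Finset (Fin n) → ℝ)
    (hP : ∀ m S, (∀ k ∈ S, m < k) → P (insert m S) = DD A P S m) (I J : Finset (Fin n)) :
    ∑ i ∈ symmDiff I J, sg (symmDiff I J) i * P (symmDiff I {i}) * P (symmDiff J {i}) = 0 := by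
  have h : ∑ i ∈ symmDiff I J, sg (symmDiff I J) i * P (symmDiff I {i}) * P (symmDiff J {i}) =
    (∑ i ∈ I \ J, sg (symmDiff I J) i * P (symmDiff I {i}) * P (symmDiff J {i})) +
    ∑ i ∈ J \ I, sg (symmDiff I J) i * P (symmDiff I {i}) * P (symmDiff J {i}) :=
    Finset.sum_union disjoint_sdiff_sdiff
  have h2 := half A hA P hP J I
  rw [symmDiff_comm J I] at h2
  have h3 : ∑ i ∈ J \ I, sg (symmDiff I J) i * P (symmDiff I {i}) * P (symmDiff J {i}) =
      ∑ i ∈ J \ I, sg (symmDiff I J) i * P (symmDiff J {i}) * P (symmDiff I {i}) :=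
    Finset.sum_congr rfl fun i _ => by ring
  rw [h, h3, ← h2, ← half A hA P hP I J, Finset.sum_comm (s := J), ← Finset.sum_add_distrib]
  refine Finset.sum_eq_zero fun i _ => ?_
  rw [← Finset.sum_add_distrib]
  refine Finset.sum_eq_zero fun j _ => ?_
  rw [hA i j]
  ring

/-- building a permutation from its first value and the rest -/
def mk {N : ℕ} (j : Fin (N + 1)) (t : Equiv.Perm (Fin N)) : Equiv.Perm (Fin (N + 1)) :=
  (Fin.cycleRange j)⁻¹ * Equiv.Perm.decomposeFin.symm (0, t)

lemma mk_zero {N : ℕ} (j : Fin (N + 1)) (t : Equiv.Perm (Fin N)) : mk j t 0 = j := by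
  simp [mk, Equiv.Perm.inv_def]

lemma mk_succ {N : ℕ} (j : Fin (N + 1)) (t : Equiv.Perm (Fin N)) (k : Fin N) :
    mk j t k.succ = j.succAbove (t k) := by
  simp [mk, Equiv.Perm.inv_def]

lemma mk_sign {N : ℕ} (j : Fin (N + 1)) (t : Equiv.Perm (Fin N)) :
    Equiv.Perm.sign (mk j t) = (-1) ^ (j : ℕ) * Equiv.Perm.sign t := by
  simp [mk]

lemma mk_surj {N : ℕ} (r : Equiv.Perm (Fin (N + 1))) : ∃ t, r = mk (r 0) t := by
  obtain ⟨⟨p, t⟩, h⟩ := Equiv.Perm.decomposeFin.symm.surjective ((Fin.cycleRange (r 0)) * r)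
  have hp : p = 0 := by
    have := congrArg (fun s => s 0) h
    simpa using this
  subst hp
  exact ⟨t, by rw [mk, h]; simp⟩

lemma mk_inj {N : ℕ} {j j' : Fin (N + 1)} {t t' : Equiv.Perm (Fin N)} (h : mk j t = mk j' t') :
    j = j' ∧ t = t' := by
  have hj : j = j' := by rw [← mk_zero j t, h, mk_zero]
  subst hj
  refine ⟨rfl, Equiv.ext fun k => ?_⟩
  have := congrArg (fun s => s k.succ) h
  simpa [mk_succ] using this

/-- the admissibility condition -/
def Adm {N : ℕ} (s : Equiv.Perm (Fin N)) : Prop :=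
  ∀ p q : Fin N, 2 ∣ (p : ℕ) → p ≤ q → s p ≤ s q

lemma adm_mk {N : ℕ} (j : Fin (N + 1)) (t : Equiv.Perm (Fin N)) :
    Adm (mk 0 (mk j t)) ↔ Adm t := by
  have hs : ∀ k : Fin N, mk 0 (mk j t) k.succ.succ = (j.succAbove (t k)).succ := by
    intro k; rw [mk_succ, mk_succ]; simp
  constructor
  · intro h p q hp hpq
    have := h p.succ.succ q.succ.succ (by simp; omega) (by simpa using hpq)
    rw [hs, hs] at this
    simpa using this
  · intro h p q hp hpq
    induction p using Fin.cases with
    | zero => rw [mk_zero]; exact Fin.zero_le _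
    | succ p =>
      induction p using Fin.cases with
      | zero => simp at hp
      | succ p =>
        induction q using Fin.cases with
        | zero => simp at hpq
        | succ q =>
          induction q using Fin.cases with
          | zero => simp [Fin.le_def] at hpq
          | succ q =>
            rw [hs, hs]
            have := h p q (by simp at hp; omega) (by simpa using hpq)
            simpa using this

lemma adm_zero {N : ℕ} {s : Equiv.Perm (Fin (N + 1))} (h : Adm s) : s 0 = 0 := by
  have := h 0 (s.symm 0) (by simp) (Fin.zero_le _)
  simpa using this

lemma pf_rec {N : ℕ} (M : Matrix (Fin (N + 2)) (Fin (N + 2)) ℝ) :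
    pfaffian M = ∑ j : Fin (N + 1), (-1 : ℝ) ^ (j : ℕ) * M 0 j.succ *
      pfaffian (Matrix.of fun p q : Fin N => M (j.succAbove p).succ (j.succAbove q).succ) := by
  classical
  by_cases hN : 2 ∣ N
  swap
  · have : ¬ 2 ∣ N + 2 := by omega
    simp [pfaffian, hN, this]
  have hN2 : 2 ∣ N + 2 := by omega
  simp only [pfaffian, hN, hN2, dif_pos, Finset.mul_sum]
  rw [Finset.sum_sigma']
  symm
  refine Finset.sum_bij (fun x _ => mk 0 (mk x.1 x.2)) ?_ ?_ ?_ ?_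
  · rintro ⟨j, t⟩ h
    simp only [Finset.mem_sigma, Finset.mem_univ, true_and, Finset.mem_filter] at h ⊢
    exact (adm_mk j t).2 h
  · rintro ⟨j, t⟩ _ ⟨j', t'⟩ _ h
    obtain ⟨rfl, rfl⟩ := mk_inj (mk_inj h).2
    rfl
  · intro s hs
    have hs : Adm s := (Finset.mem_filter.1 hs).2
    obtain ⟨r, hr⟩ := mk_surj s
    rw [adm_zero hs] at hr
    obtain ⟨t, ht⟩ := mk_surj r
    rw [ht] at hr
    refine ⟨⟨r 0, t⟩, ?_, hr.symm⟩
    rw [hr] at hs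
    have := (adm_mk _ _).1 hs
    simp only [Finset.mem_sigma, Finset.mem_univ, true_and, Finset.mem_filter]
    exact this
  · rintro ⟨j, t⟩ _
    have hh : N / 2 + 1 = (N + 2) / 2 := by omega
    rw [← (finCongr hh).prod_comp, Fin.prod_univ_succ]
    have h0 : ∀ h, mk 0 (mk j t) ⟨2 * ((finCongr hh 0 : Fin _) : ℕ), h⟩ = 0 := fun h => by
      exact mk_zero 0 _
    have h1 : ∀ h, mk 0 (mk j t) ⟨2 * ((finCongr hh 0 : Fin _) : ℕ) + 1, h⟩ = j.succ := fun h => by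
      have : mk 0 (mk j t) (Fin.succ 0) = j.succ := by rw [mk_succ, mk_zero]; simp
      exact this
    have hs : ∀ k : Fin N, mk 0 (mk j t) k.succ.succ = (j.succAbove (t k)).succ := by
      intro k; rw [mk_succ, mk_succ]; simp
    rw [h0, h1, mk_sign, mk_sign]
    have hprod : ∀ a b : ℝ, ∀ c d : ℝ, c = d → a = b → a * c = b * d := by
      rintro a _ c _ rfl rfl; rfl
    have key : (∏ k : Fin (N / 2), (Matrix.of fun p q : Fin N =>
          M (j.succAbove p).succ (j.succAbove q).succ)
            (t ⟨2 * (k : ℕ), by have := k.2; omega⟩) (t ⟨2 * (k : ℕ) + 1, by have := k.2; omega⟩)) =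
        ∏ i : Fin (N / 2), M
          (mk 0 (mk j t) ⟨2 * ((finCongr hh i.succ : Fin _) : ℕ), by
            have := (finCongr hh i.succ).2; omega⟩)
          (mk 0 (mk j t) ⟨2 * ((finCongr hh i.succ : Fin _) : ℕ) + 1, by
            have := (finCongr hh i.succ).2; omega⟩) := by
      refine Finset.prod_congr rfl fun i _ => ?_
      have b1 : ∀ h h', (⟨2 * ((finCongr hh i.succ : Fin _) : ℕ), h⟩ : Fin (N + 2)) =
          (⟨2 * (i : ℕ), h'⟩ : Fin N).succ.succ := fun h h' => by
        ext; simp; omega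
      have b2 : ∀ h h', (⟨2 * ((finCongr hh i.succ : Fin _) : ℕ) + 1, h⟩ : Fin (N + 2)) =
          (⟨2 * (i : ℕ) + 1, h'⟩ : Fin N).succ.succ := fun h h' => by
        ext; simp; omega
      rw [b1 _ (by have := i.2; omega), b2 _ (by have := i.2; omega), hs, hs]
      rfl
    rw [key]
    push_cast
    simp
    ring

lemma pfMinor_eq {n N : ℕ} (A : Matrix (Fin n) (Fin n) ℝ) (e : Fin N → Fin n)
    (he : StrictMono e) :
    pfMinor A (Finset.univ.image e) = pfaffian (Matrix.of fun p q => A (e p) (e q)) := by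
  have main : ∀ S : Finset (Fin n), S.card = N → (∀ x, e x ∈ S) →
      pfMinor A S = pfaffian (Matrix.of fun p q => A (e p) (e q)) := by
    rintro S rfl hS
    have := Finset.orderEmbOfFin_unique rfl hS he
    rw [this]
    rfl
  apply main
  · rw [Finset.card_image_of_injective _ he.injective]; simp
  · intro x; simp

lemma pfMinor_rec {n : ℕ} (A : Matrix (Fin n) (Fin n) ℝ) (m : Fin n) (S : Finset (Fin n))
    (h : ∀ k ∈ S, m < k) : pfMinor A (insert m S) = DD A (pfMinor A) S m := by
  obtain ⟨N, e, he, rfl⟩ : ∃ N, ∃ e : Fin N → Fin n, StrictMono e ∧ S = Finset.univ.image e :=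
    ⟨S.card, S.orderEmbOfFin rfl, (S.orderEmbOfFin rfl).strictMono, by
      ext x
      have := Finset.range_orderEmbOfFin S rfl
      have hx : x ∈ Set.range (S.orderEmbOfFin rfl) ↔ x ∈ S := by rw [this]; simp
      rw [← hx]; simp⟩
  have hc : StrictMono (Fin.cons m e : Fin (N + 1) → Fin n) := by
    rw [Fin.strictMono_iff_lt_succ] 
    intro i
    have hN : 0 < N := i.pos
    obtain ⟨N, rfl⟩ : ∃ k, N = k + 1 := ⟨N - 1, by omega⟩
    induction i using Fin.cases with
    | zero => simpa using h (e 0) (by simp)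
    | succ i =>
      rw [← Fin.succ_castSucc, Fin.cons_succ, Fin.cons_succ]
      exact he (Fin.castSucc_lt_succ)
  have him : insert m (Finset.univ.image e) =
      Finset.univ.image (Fin.cons m e : Fin (N + 1) → Fin n) := by
    ext x
    simp [Fin.exists_fin_succ, eq_comm]
  rw [him, pfMinor_eq A _ hc, DD, Finset.sum_image fun a _ b _ h => he.injective h]
  cases N with
  | zero => simp [pfaffian]
  | succ N =>
    rw [pf_rec]
    refine Finset.sum_congr rfl fun j _ => ?_
    rw [sg_emb he]
    have hj : (Finset.univ.image e).erase (e j) = Finset.univ.image (e ∘ j.succAbove) := by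
      ext x
      simp only [Finset.mem_erase, Finset.mem_image, Finset.mem_univ, true_and, Function.comp]
      constructor
      · rintro ⟨hx, a, rfl⟩
        obtain ⟨b, rfl⟩ := Fin.exists_succAbove_eq (x := a) (y := j) (fun h => hx (by rw [h]))
        exact ⟨b, rfl⟩
      · rintro ⟨b, rfl⟩
        exact ⟨fun h => Fin.succAbove_ne j b (he.injective h), _, rfl⟩
    rw [hj, pfMinor_eq A _ (he.comp (Fin.strictMono_succAbove j))]
    rfl

end PfEx

/-- **Pfaffian Grassmann–Plücker relations.** Let `A` be a skew-symmetric `n × n`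
real matrix, and for `S ⊆ {1,…,n}` let `p S` be the Pfaffian of the principal minor
of `A` indexed by `S`.  If `I₁ Δ I₂ = {i₁ < i₂ < … < i_l}` then
`∑_{j=1}^l (−1)^j p(I₁ Δ {i_j}) p(I₂ Δ {i_j}) = 0`. -/
theorem pfaffian_exchange {n : ℕ} (A : Matrix (Fin n) (Fin n) ℝ)
    (hA : A.transpose = -A) (I₁ I₂ : Finset (Fin n)) :
    ∑ j : Fin (symmDiff I₁ I₂).card,
      (-1 : ℝ) ^ ((j : ℕ) + 1) *
        pfMinor A (symmDiff I₁ {((symmDiff I₁ I₂).orderIsoOfFin rfl j : Fin n)}) *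
        pfMinor A (symmDiff I₂ {((symmDiff I₁ I₂).orderIsoOfFin rfl j : Fin n)}) = 0 := by
  have hA' : ∀ i j, A i j = - A j i := fun i j => by
    have := congrFun (congrFun hA j) i
    simpa using this
  have ht := PfEx.total A hA' (pfMinor A) (PfEx.pfMinor_rec A) I₁ I₂
  set S := symmDiff I₁ I₂ with hS
  have he : StrictMono (S.orderEmbOfFin rfl) := (S.orderEmbOfFin rfl).strictMono
  have him : Finset.univ.image (S.orderEmbOfFin rfl) = S := by
    ext x
    have := Finset.range_orderEmbOfFin S rfl
    have hx : x ∈ Set.range (S.orderEmbOfFin rfl) ↔ x ∈ S := by rw [this]; simp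
    rw [← hx]; simp
  have hsum : ∀ f : Fin n → ℝ, ∑ i ∈ S, f i = ∑ j, f (S.orderEmbOfFin rfl j) := by
    intro f
    conv_lhs => rw [← him]
    exact Finset.sum_image fun a _ b _ h => he.injective h
  have hsg : ∀ j, PfEx.sg S (S.orderEmbOfFin rfl j) = (-1) ^ (j : ℕ) := by
    intro j
    have := PfEx.sg_emb he j
    rwa [him] at this
  rw [hsum] at ht
  rw [← neg_zero, ← ht, ← Finset.sum_neg_distrib]
  refine Finset.sum_congr rfl fun j _ => ?_
  rw [hsg, pow_succ, Finset.coe_orderIsoOfFin_apply]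
  ring
end

section
/- For a skew-symmetric real n×n matrix A, the map p : 2^{I} → ℝ defined by p(S) = Pf((a_{ij})_{i,j∈S}) is a twisted Pfaffian map: it is not identically zero, any two sets with nonzero value have cardinalities of equal parity, and it satisfies the Pfaffian exchange relation. -/
/-- A **twisted Pfaffian map** on subsets of `{1,…,n}` (with real values):
it is not identically zero, any two sets with nonzero value have cardinalities of
equal parity, and it satisfies the Pfaffian exchange relation: whenever
`A Δ B = {i₁ < … < i_l}`, `∑_{j=1}^l (−1)^j p(A Δ {i_j}) p(B Δ {i_j}) = 0`. -/
def IsTwistedPfaffianMap {n : ℕ} (p : Finset (Fin n) → ℝ) : Prop :=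
  (∃ S, p S ≠ 0) ∧
  (∀ A B : Finset (Fin n), p A ≠ 0 → p B ≠ 0 → A.card % 2 = B.card % 2) ∧
  (∀ A B : Finset (Fin n),
    ∑ j : Fin (symmDiff A B).card,
      (-1 : ℝ) ^ ((j : ℕ) + 1) *
        p (symmDiff A {((symmDiff A B).orderIsoOfFin rfl j : Fin n)}) *
        p (symmDiff B {((symmDiff A B).orderIsoOfFin rfl j : Fin n)}) = 0)

/-- Left contraction on the exterior algebra. -/
noncomputable def ctr {V : Type*} [AddCommGroup V] [Module ℝ V] (d : Module.Dual ℝ V) :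
    ExteriorAlgebra ℝ V →ₗ[ℝ] ExteriorAlgebra ℝ V :=
  CliffordAlgebra.contractLeft (Q := (0 : QuadraticForm ℝ V)) d

theorem ctr_one {V : Type*} [AddCommGroup V] [Module ℝ V] (d : Module.Dual ℝ V) :
    ctr d 1 = 0 := CliffordAlgebra.contractLeft_one (Q := (0 : QuadraticForm ℝ V)) d

theorem ctr_ι_mul {V : Type*} [AddCommGroup V] [Module ℝ V] (d : Module.Dual ℝ V) (m : V)
    (x : ExteriorAlgebra ℝ V) : ctr d (ExteriorAlgebra.ι ℝ m * x) =
      d m • x - ExteriorAlgebra.ι ℝ m * ctr d x :=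
  CliffordAlgebra.contractLeft_ι_mul (Q := (0 : QuadraticForm ℝ V)) d m x

open CliffordAlgebra in
theorem exists_wick {n : ℕ} (A : Matrix (Fin n) (Fin n) ℝ) (hA : A.transpose = -A) :
    ∃ Φ : ExteriorAlgebra ℝ (Fin n → ℝ) →ₗ[ℝ] ℝ, Φ 1 = 1 ∧
      ∀ m x, Φ (ExteriorAlgebra.ι ℝ m * x) =
        Φ (ctr (Matrix.toBilin' A m) x) := by
  have hB : (-(Matrix.toBilin' A)).toQuadraticMap =
      (0 : QuadraticForm ℝ (Fin n → ℝ)) - (0 : QuadraticForm ℝ (Fin n → ℝ)) := by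
    ext v
    have h1 : Matrix.toBilin' A v v = - Matrix.toBilin' A v v := by
      rw [Matrix.toBilin'_apply']
      conv_lhs => rw [dotProduct_comm, ← Matrix.vecMul_transpose, ← Matrix.dotProduct_mulVec, hA]
      rw [Matrix.neg_mulVec, dotProduct_neg]
    have h2 : Matrix.toBilin' A v v = 0 := by linarith
    simp [h2]
  refine ⟨(ExteriorAlgebra.algebraMapInv (R := ℝ) (M := Fin n → ℝ)).toLinearMap ∘ₗ
    (changeForm hB), ?_, ?_⟩
  · have : changeForm hB 1 = 1 := changeForm_one hB
    simp only [LinearMap.comp_apply]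
    erw [this]
    simp
  · intro m x
    have h : changeForm hB (ExteriorAlgebra.ι ℝ m * x) = ExteriorAlgebra.ι ℝ m *
        (show ExteriorAlgebra ℝ (Fin n → ℝ) from changeForm hB x) +
        ctr (Matrix.toBilin' A m) (changeForm hB x) := by
      refine (changeForm_ι_mul hB m x).trans ?_
      rw [LinearMap.neg_apply, map_neg, LinearMap.neg_apply, sub_neg_eq_add]
      rfl
    have h2 : changeForm hB (ctr (Matrix.toBilin' A m) x) =
        ctr (Matrix.toBilin' A m) (changeForm hB x) :=
      changeForm_contractLeft hB (Matrix.toBilin' A m) x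
    have h3 : ExteriorAlgebra.algebraMapInv (ExteriorAlgebra.ι ℝ m) = 0 := by
      simp [ExteriorAlgebra.algebraMapInv]
    rw [LinearMap.comp_apply, LinearMap.comp_apply, h2]
    refine (congrArg _ h).trans ?_
    rw [map_add, AlgHom.toLinearMap_apply, map_mul, h3, zero_mul, zero_add]

theorem contractLeft_ιMulti {V : Type*} [AddCommGroup V] [Module ℝ V] (d : Module.Dual ℝ V) :
    ∀ {N : ℕ} (f : Fin (N + 1) → V),
      ctr d (ExteriorAlgebra.ιMulti ℝ (N + 1) f) =
        ∑ j : Fin (N + 1), ((-1 : ℝ) ^ (j : ℕ) * d (f j)) •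
          ExteriorAlgebra.ιMulti ℝ N (fun k => f (j.succAbove k)) := by
  intro N
  induction N with
  | zero =>
    intro f
    rw [ExteriorAlgebra.ιMulti_succ_apply]
    rw [ctr_ι_mul, ExteriorAlgebra.ιMulti_zero_apply, ctr_one]
    simp
  | succ N ih =>
    intro f
    rw [ExteriorAlgebra.ιMulti_succ_apply]
    rw [ctr_ι_mul]
    rw [Fin.sum_univ_succ, ih, sub_eq_add_neg]
    congr 1
    · simp only [Fin.val_zero, pow_zero, one_mul, Fin.zero_succAbove]; rfl
    · rw [Finset.mul_sum, ← Finset.sum_neg_distrib]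
      refine Finset.sum_congr rfl fun j _ => ?_
      rw [ExteriorAlgebra.ιMulti_succ_apply]
      simp only [Matrix.vecTail, Function.comp_def, Fin.succ_succAbove_zero,
        Fin.succ_succAbove_succ, Fin.val_succ, pow_succ]
      rw [mul_smul_comm, ← neg_smul]
      congr 1
      ring

theorem prod_fin_split {m m' : ℕ} (hm : m = m' + 1) (f : Fin m → ℝ) :
    ∏ k, f k = f ⟨0, by omega⟩ * ∏ k : Fin m', f ⟨k + 1, by omega⟩ := by
  subst hm
  rw [Fin.prod_univ_succ]
  rfl

/-- Permutation sending `0 ↦ 0`, `1 ↦ j + 1` and acting as `τ` on the rest. -/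
def extPerm {N : ℕ} (j : Fin (N + 1)) (τ : Equiv.Perm (Fin N)) : Equiv.Perm (Fin (N + 2)) :=
  Equiv.Perm.decomposeFin.symm (0, (j.cycleRange)⁻¹ * Equiv.Perm.decomposeFin.symm (0, τ))

theorem extPerm_zero {N : ℕ} (j : Fin (N + 1)) (τ : Equiv.Perm (Fin N)) :
    extPerm j τ 0 = 0 := by simp [extPerm]

theorem extPerm_one {N : ℕ} (j : Fin (N + 1)) (τ : Equiv.Perm (Fin N)) :
    extPerm j τ 1 = j.succ := by
  simp [extPerm]

theorem extPerm_succ {N : ℕ} (j : Fin (N + 1)) (τ : Equiv.Perm (Fin N)) (k : Fin N) :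
    extPerm j τ k.succ.succ = (j.succAbove (τ k)).succ := by
  simp [extPerm]

theorem sign_extPerm {N : ℕ} (j : Fin (N + 1)) (τ : Equiv.Perm (Fin N)) :
    Equiv.Perm.sign (extPerm j τ) = (-1) ^ (j : ℕ) * Equiv.Perm.sign τ := by
  simp [extPerm]

theorem exists_fix_zero {N : ℕ} (σ : Equiv.Perm (Fin (N + 1))) (h : σ 0 = 0) :
    ∃ τ, σ = Equiv.Perm.decomposeFin.symm (0, τ) := by
  obtain ⟨⟨p, τ⟩, rfl⟩ := Equiv.Perm.decomposeFin.symm.surjective σ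
  simp at h
  exact ⟨τ, by rw [h]⟩

theorem exists_extPerm {N : ℕ} (σ : Equiv.Perm (Fin (N + 2))) (h : σ 0 = 0) :
    ∃ j τ, σ = extPerm j τ := by
  obtain ⟨ρ, rfl⟩ := exists_fix_zero σ h
  obtain ⟨τ, hτ⟩ := exists_fix_zero ((ρ 0).cycleRange * ρ) (by simp)
  refine ⟨ρ 0, τ, ?_⟩
  rw [extPerm, ← hτ]
  simp

theorem extPerm_good {N : ℕ} (j : Fin (N + 1)) (τ : Equiv.Perm (Fin N)) :
    (∀ p q : Fin (N + 2), 2 ∣ (p : ℕ) → p ≤ q → extPerm j τ p ≤ extPerm j τ q) ↔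
    (∀ p q : Fin N, 2 ∣ (p : ℕ) → p ≤ q → τ p ≤ τ q) := by
  constructor
  · intro h p q hp hpq
    have := h p.succ.succ q.succ.succ (by simp; omega) (by simpa using hpq)
    rw [extPerm_succ, extPerm_succ, Fin.succ_le_succ_iff] at this
    exact (Fin.strictMono_succAbove j).le_iff_le.1 this
  · intro h p q hp hpq
    induction p using Fin.cases with
    | zero => rw [extPerm_zero]; exact Fin.zero_le _
    | succ p =>
      induction p using Fin.cases with
      | zero => simp at hp
      | succ p =>
        induction q using Fin.cases with
        | zero => simp at hpq
        | succ q =>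
          induction q using Fin.cases with
          | zero => simp [Fin.le_def] at hpq
          | succ q =>
            rw [extPerm_succ, extPerm_succ, Fin.succ_le_succ_iff]
            refine (Fin.strictMono_succAbove j).le_iff_le.2 (h p q ?_ ?_)
            · simp at hp; omega
            · simpa using hpq

theorem pfaffian_succ {N : ℕ} (M : Matrix (Fin (N + 2)) (Fin (N + 2)) ℝ) :
    pfaffian M = ∑ j : Fin (N + 1), (-1 : ℝ) ^ (j : ℕ) * M 0 j.succ *
      pfaffian (Matrix.of fun p q => M (j.succAbove p).succ (j.succAbove q).succ) := by
  by_cases hN : 2 ∣ N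
  · have hN2 : 2 ∣ N + 2 := by omega
    unfold pfaffian
    simp only [dif_pos hN, dif_pos hN2]
    simp_rw [Finset.mul_sum]
    rw [Finset.sum_sigma']
    symm
    refine Finset.sum_bij (fun x _ => extPerm x.1 x.2) ?_ ?_ ?_ ?_
    · rintro ⟨j, τ⟩ h
      simp only [Finset.mem_sigma, Finset.mem_univ, true_and, Finset.mem_filter] at h ⊢
      exact (extPerm_good j τ).2 h
    · rintro ⟨j, τ⟩ h ⟨j', τ'⟩ h' heq
      simp only at heq
      have h1 : j = j' := by
        have := extPerm_one j τ
        rw [heq, extPerm_one] at this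
        exact (Fin.succ_injective _ this).symm
      subst h1
      have : τ = τ' := by
        simpa [extPerm] using heq
      rw [this]
    · intro σ hσ
      simp only [Finset.mem_filter, Finset.mem_univ, true_and] at hσ
      have h0 : σ 0 = 0 := by
        have := hσ 0 (σ.symm 0) (by simp) (Fin.zero_le _)
        simpa using this
      obtain ⟨j, τ, rfl⟩ := exists_extPerm σ h0
      exact ⟨⟨j, τ⟩, by simpa using (extPerm_good j τ).1 hσ, rfl⟩
    · rintro ⟨j, τ⟩ h
      simp only
      rw [prod_fin_split (show (N + 2) / 2 = N / 2 + 1 by omega), sign_extPerm]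
      have e0 : (⟨2 * 0, by omega⟩ : Fin (N + 2)) = 0 := rfl
      have e1 : (⟨2 * 0 + 1, by omega⟩ : Fin (N + 2)) = 1 := rfl
      rw [e0, e1, extPerm_zero, extPerm_one]
      have e2 : ∀ k : Fin (N / 2), (⟨2 * (k + 1), by omega⟩ : Fin (N + 2)) =
          Fin.succ (Fin.succ ⟨2 * k, by omega⟩) := fun k => Fin.ext (by simp; ring)
      have e3 : ∀ k : Fin (N / 2), (⟨2 * (k + 1) + 1, by omega⟩ : Fin (N + 2)) =
          Fin.succ (Fin.succ ⟨2 * k + 1, by omega⟩) := fun k => Fin.ext (by simp; ring)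
      simp only [e2, e3, extPerm_succ, Matrix.of_apply]
      push_cast
      ring
  · have hN2 : ¬ 2 ∣ N + 2 := by omega
    simp [pfaffian, hN, hN2]

theorem pfaffian_eq_wick {V : Type*} [AddCommGroup V] [Module ℝ V] (B : V →ₗ[ℝ] Module.Dual ℝ V)
    (Φ : ExteriorAlgebra ℝ V →ₗ[ℝ] ℝ) (h1 : Φ 1 = 1)
    (hΦ : ∀ m x, Φ (ExteriorAlgebra.ι ℝ m * x) =
      Φ (ctr (B m) x)) :
    ∀ {N : ℕ} (f : Fin N → V),
      pfaffian (Matrix.of fun p q => B (f p) (f q)) = Φ (ExteriorAlgebra.ιMulti ℝ N f) := by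
  intro N
  induction N using Nat.strong_induction_on with
  | _ N ih =>
    match N, ih with
    | 0, _ =>
      intro f
      rw [ExteriorAlgebra.ιMulti_zero_apply, h1]
      have : (Finset.univ.filter (fun σ : Equiv.Perm (Fin 0) =>
          ∀ p q : Fin 0, 2 ∣ (p : ℕ) → p ≤ q → σ p ≤ σ q)) = {1} := by
        ext σ; simp [Subsingleton.elim σ 1]
      simp only [pfaffian, dvd_zero, dif_pos, this]
      simp
    | 1, _ =>
      intro f
      rw [ExteriorAlgebra.ιMulti_succ_apply, ExteriorAlgebra.ιMulti_zero_apply, hΦ]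
      rw [ctr_one]
      simp [pfaffian]
    | N + 2, ih =>
      intro f
      rw [ExteriorAlgebra.ιMulti_succ_apply, hΦ, contractLeft_ιMulti, pfaffian_succ, map_sum]
      refine Finset.sum_congr rfl fun j _ => ?_
      rw [map_smul, ← ih N (by omega)]
      rfl

/-- Basis vector in the exterior algebra. -/
noncomputable def bv {n : ℕ} (i : Fin n) : ExteriorAlgebra ℝ (Fin n → ℝ) :=
  ExteriorAlgebra.ι ℝ (Pi.single i (1 : ℝ))

/-- Basis monomial in the exterior algebra. -/
noncomputable def Es {n : ℕ} (S : Finset (Fin n)) : ExteriorAlgebra ℝ (Fin n → ℝ) :=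
  ((S.sort (· ≤ ·)).map bv).prod

/-- Sign `(-1)^{#{x ∈ S, x < s}}`. -/
noncomputable def sg {n : ℕ} (s : Fin n) (S : Finset (Fin n)) : ℝ :=
  (-1) ^ (S.filter (· < s)).card

theorem Es_empty {n : ℕ} : Es (∅ : Finset (Fin n)) = 1 := by simp [Es]

theorem Es_insert {n : ℕ} {a : Fin n} {S : Finset (Fin n)} (h : ∀ b ∈ S, a < b) :
    Es (insert a S) = bv a * Es S := by
  rw [Es, Finset.sort_insert _ (fun b hb => (h b hb).le) (fun ha => lt_irrefl _ (h a ha))]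
  simp [Es]

theorem bv_mul_bv {n : ℕ} (a b : Fin n) : bv a * bv b = - (bv b * bv a) :=
  eq_neg_of_add_eq_zero_left (ExteriorAlgebra.ι_add_mul_swap _ _)

theorem bv_sq {n : ℕ} (a : Fin n) : bv a * bv a = 0 := ExteriorAlgebra.ι_sq_zero _

theorem sg_min {n : ℕ} {s : Fin n} {S : Finset (Fin n)} (h : ∀ b ∈ S, s ≤ b) : sg s S = 1 := by
  have : S.filter (· < s) = ∅ := Finset.filter_eq_empty_iff.2 fun b hb => not_lt.2 (h b hb)
  simp [sg, this]

theorem sg_insert {n : ℕ} {s a : Fin n} {S : Finset (Fin n)} (ha : a ∉ S) (h : a < s) :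
    sg s (insert a S) = - sg s S := by
  have : a ∉ S.filter (· < s) := fun h => ha (Finset.mem_filter.1 h).1
  rw [sg, Finset.filter_insert, if_pos h, Finset.card_insert_of_notMem this, pow_succ, sg]
  ring

theorem sg_insert_of_le {n : ℕ} {s a : Fin n} {S : Finset (Fin n)} (h : s ≤ a) :
    sg s (insert a S) = sg s S := by
  rw [sg, Finset.filter_insert, if_neg (not_lt.2 h), sg]

theorem bv_mul_Es {n : ℕ} (s : Fin n) (S : Finset (Fin n)) :
    bv s * Es S = if s ∈ S then 0 else sg s S • Es (insert s S) := by
  induction S using Finset.induction_on_min with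
  | empty =>
    rw [if_neg (Finset.notMem_empty s), sg_min (by simp), one_smul, Es_insert (by simp)]
  | insert a S h ih =>
    have haS : a ∉ S := fun ha => lt_irrefl _ (h a ha)
    rcases lt_trichotomy s a with hs | rfl | hs
    · have h1 : ∀ b ∈ insert a S, s < b := by
        intro b hb
        rcases Finset.mem_insert.1 hb with rfl | hb
        · exact hs
        · exact hs.trans (h b hb)
      rw [if_neg (fun hh => lt_irrefl _ (h1 s hh)), sg_min (fun b hb => (h1 b hb).le), one_smul,
        Es_insert h1]
    · rw [if_pos (Finset.mem_insert_self _ _), Es_insert h, ← mul_assoc, bv_sq, zero_mul]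
    · rw [Es_insert h, ← mul_assoc, bv_mul_bv, neg_mul, mul_assoc, ih]
      by_cases hsS : s ∈ S
      · simp [hsS]
      · have : s ∉ insert a S := by simp [hsS, hs.ne']
        rw [if_neg hsS, if_neg this, sg_insert haS hs, Finset.insert_comm, Es_insert (a := a), mul_smul_comm,
          neg_smul]
        intro b hb
        rcases Finset.mem_insert.1 hb with rfl | hb
        · exact hs
        · exact h b hb

theorem ctr_Es {n : ℕ} (d : Module.Dual ℝ (Fin n → ℝ)) (S : Finset (Fin n)) :
    ctr d (Es S) = ∑ t ∈ S, (sg t S * d (Pi.single t 1)) • Es (S.erase t) := by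
  induction S using Finset.induction_on_min with
  | empty => simp [Es_empty, ctr_one]
  | insert a S h ih =>
    have haS : a ∉ S := fun ha => lt_irrefl _ (h a ha)
    rw [Es_insert h, bv, ctr_ι_mul, ih, Finset.sum_insert haS, Finset.erase_insert haS, sg_min,
      one_mul, sub_eq_add_neg, Finset.mul_sum, ← Finset.sum_neg_distrib]
    · congr 1
      refine Finset.sum_congr rfl fun t ht => ?_
      have hta := h t ht
      rw [Finset.erase_insert_of_ne hta.ne, Es_insert, sg_insert haS hta, bv, mul_smul_comm,
        neg_mul, neg_smul]
      exact fun b hb => h b (Finset.mem_of_mem_erase hb)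
    · intro b hb
      rcases Finset.mem_insert.1 hb with rfl | hb
      · exact le_rfl
      · exact (h b hb).le

theorem Es_eq_ιMulti {n : ℕ} (S : Finset (Fin n)) :
    Es S = ExteriorAlgebra.ιMulti ℝ S.card
      (fun i => Pi.single ((S.orderIsoOfFin rfl i : S) : Fin n) (1 : ℝ)) := by
  rw [ExteriorAlgebra.ιMulti_apply, Es, ← Finset.listMap_orderEmbOfFin_finRange S rfl,
    List.map_map, List.ofFn_eq_map]
  rfl

theorem pfMinor_eq {n : ℕ} (A : Matrix (Fin n) (Fin n) ℝ)
    (Φ : ExteriorAlgebra ℝ (Fin n → ℝ) →ₗ[ℝ] ℝ) (h1 : Φ 1 = 1)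
    (hΦ : ∀ m x, Φ (ExteriorAlgebra.ι ℝ m * x) = Φ (ctr (Matrix.toBilin' A m) x))
    (S : Finset (Fin n)) : pfMinor A S = Φ (Es S) := by
  rw [Es_eq_ιMulti, ← pfaffian_eq_wick (Matrix.toBilin' A) Φ h1 hΦ, pfMinor]
  simp only [Matrix.toBilin'_single]

theorem card_filter_lt_orderIso {n : ℕ} (S : Finset (Fin n)) (j : Fin S.card) :
    (S.filter (· < ((S.orderIsoOfFin rfl j : S) : Fin n))).card = j := by
  have : S.filter (· < ((S.orderIsoOfFin rfl j : S) : Fin n)) =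
      (Finset.univ.filter (· < j)).map (S.orderEmbOfFin rfl).toEmbedding := by
    ext x
    simp only [Finset.mem_filter, Finset.mem_map, Finset.mem_univ, true_and]
    constructor
    · rintro ⟨hx, hlt⟩
      refine ⟨(S.orderIsoOfFin rfl).symm ⟨x, hx⟩, ?_, ?_⟩
      · rw [OrderIso.symm_apply_lt]; exact hlt
      · simp [← Finset.coe_orderIsoOfFin_apply]
    · rintro ⟨i, hi, rfl⟩
      exact ⟨S.orderEmbOfFin_mem rfl i, (S.orderEmbOfFin rfl).lt_iff_lt.2 hi⟩
  rw [this, Finset.card_map, Finset.filter_gt_eq_Iio, Fin.card_Iio]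

theorem sg_mul_sg {n : ℕ} (s : Fin n) (X Y : Finset (Fin n)) :
    sg s X * sg s Y = sg s (symmDiff X Y) := by
  have hf : (symmDiff X Y).filter (· < s) = symmDiff (X.filter (· < s)) (Y.filter (· < s)) := by
    ext x; simp only [Finset.mem_symmDiff, Finset.mem_filter]; tauto
  rw [sg, sg, sg, hf]
  generalize X.filter (· < s) = X
  generalize Y.filter (· < s) = Y
  have h1 := Finset.card_sdiff_add_card_inter X Y
  have h2 := Finset.card_sdiff_add_card_inter Y X
  have h3 : (symmDiff X Y).card = (X \ Y).card + (Y \ X).card := by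
    rw [symmDiff_def, Finset.sup_eq_union, Finset.card_union_of_disjoint disjoint_sdiff_sdiff]
  rw [Finset.inter_comm] at h2
  rw [h3, ← h1, ← h2, ← pow_add]
  rw [show (X \ Y).card + (X ∩ Y).card + ((Y \ X).card + (X ∩ Y).card) =
    (X \ Y).card + (Y \ X).card + 2 * (X ∩ Y).card by ring, pow_add, pow_mul]
  simp

theorem half_sum {n : ℕ} (Φ : ExteriorAlgebra ℝ (Fin n → ℝ) →ₗ[ℝ] ℝ) (X Y : Finset (Fin n)) :
    ∑ s ∈ X, sg s X * Φ (Es (X.erase s)) * Φ (bv s * Es Y) =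
      ∑ s ∈ X \ Y, sg s (symmDiff X Y) * Φ (Es (symmDiff X {s})) * Φ (Es (symmDiff Y {s})) := by
  symm
  refine (Finset.sum_congr rfl ?_).trans
    (Finset.sum_subset (Finset.sdiff_subset (s := X) (t := Y)) ?_)
  · intro s hs
    obtain ⟨hX, hY⟩ := Finset.mem_sdiff.1 hs
    have e1 : symmDiff X {s} = X.erase s := by
      ext x; simp only [Finset.mem_symmDiff, Finset.mem_singleton, Finset.mem_erase]; grind
    have e2 : symmDiff Y {s} = insert s Y := by
      ext x; simp only [Finset.mem_symmDiff, Finset.mem_singleton, Finset.mem_insert]; grind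
    rw [bv_mul_Es, if_neg hY, map_smul, e1, e2, ← sg_mul_sg, smul_eq_mul]
    ring
  · intro s hs hs'
    have : s ∈ Y := by by_contra h; exact hs' (Finset.mem_sdiff.2 ⟨hs, h⟩)
    rw [bv_mul_Es, if_pos this, map_zero, mul_zero]

/-- For a skew-symmetric real `n × n` matrix `A`, the map `S ↦ Pf(A_S)` taking a
subset to the Pfaffian of the corresponding principal minor is a twisted Pfaffian
map. -/
theorem pfMinor_isTwistedPfaffianMap {n : ℕ} (A : Matrix (Fin n) (Fin n) ℝ)
    (hA : A.transpose = -A) :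
    IsTwistedPfaffianMap (fun S => pfMinor A S) := by
  obtain ⟨Φ, h1, hΦ⟩ := exists_wick A hA
  refine ⟨⟨∅, ?_⟩, ?_, ?_⟩
  · simp only
    rw [pfMinor_eq A Φ h1 hΦ, Es_empty, h1]
    exact one_ne_zero
  · have key : ∀ S : Finset (Fin n), pfMinor A S ≠ 0 → S.card % 2 = 0 := by
      intro S hS
      by_contra h
      exact hS (by rw [pfMinor, pfaffian, dif_neg (by omega)])
    intro X Y hX hY
    rw [key X hX, key Y hY]
  · intro X Y
    simp only [pfMinor_eq A Φ h1 hΦ]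
    have exp : ∀ X Y : Finset (Fin n),
        ∑ s ∈ X, sg s X * Φ (Es (X.erase s)) * Φ (bv s * Es Y) =
        ∑ s ∈ X, ∑ t ∈ Y, sg s X * Φ (Es (X.erase s)) * (sg t Y * A s t * Φ (Es (Y.erase t))) := by
      intro X Y
      refine Finset.sum_congr rfl fun s _ => ?_
      rw [bv, hΦ, ctr_Es, map_sum, Finset.mul_sum]
      refine Finset.sum_congr rfl fun t _ => ?_
      rw [map_smul, Matrix.toBilin'_single, smul_eq_mul]
    have main : ∑ s ∈ X, sg s X * Φ (Es (X.erase s)) * Φ (bv s * Es Y) +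
        ∑ s ∈ Y, sg s Y * Φ (Es (Y.erase s)) * Φ (bv s * Es X) = 0 := by
      rw [exp, exp, Finset.sum_comm (s := Y), ← Finset.sum_add_distrib]
      refine Finset.sum_eq_zero fun s _ => ?_
      rw [← Finset.sum_add_distrib]
      refine Finset.sum_eq_zero fun t _ => ?_
      have : A t s = - A s t := congrFun (congrFun hA s) t
      rw [this]
      ring
    rw [half_sum, half_sum] at main
    have hsum : ∑ s ∈ symmDiff X Y, sg s (symmDiff X Y) * Φ (Es (symmDiff X {s})) *
        Φ (Es (symmDiff Y {s})) = 0 := by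
      rw [← main]
      conv_lhs => rw [symmDiff_def, Finset.sup_eq_union]
      rw [Finset.sum_union disjoint_sdiff_sdiff]
      simp only [← Finset.sup_eq_union, ← symmDiff_def]
      congr 1
      refine Finset.sum_congr rfl fun s _ => ?_
      rw [symmDiff_comm X Y]
      ring
    rw [← neg_eq_zero, ← hsum, ← Finset.sum_coe_sort (symmDiff X Y),
      ← (Equiv.sum_comp ((symmDiff X Y).orderIsoOfFin rfl).toEquiv), ← Finset.sum_neg_distrib]
    refine Finset.sum_congr rfl fun j _ => ?_
    simp only [RelIso.coe_fn_toEquiv]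
    rw [sg, card_filter_lt_orderIso, pow_succ]
    ring
end

section
/- The sign map obtained from a skew-symmetric real matrix is invariant under basis change up to global sign: if A is skew-symmetric with a_{ij} ≠ 0 and C is the matrix obtained by the column-exchange-and-sign-change construction at {i, j}, then the map S ↦ sign Pf(C_S) equals the map S ↦ sign Pf(A_{S Δ {i,j}}) times the constant sign(a_{ij}); in particular the two families of signs {sign Pf(A_{S Δ {i,j}})}_S and {sign Pf(C_S)}_S are equal up to a single global sign. -/
/-- The compound matrix `(A, I_n)` after swapping columns `i, j` of `A` with
columns `i, j` of the identity: its left block. -/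
def swapLeft {n : ℕ} (A : Matrix (Fin n) (Fin n) ℝ) (i j : Fin n) :
    Matrix (Fin n) (Fin n) ℝ :=
  Matrix.of fun r c => if c = i ∨ c = j then (if r = c then 1 else 0) else A r c

/-- The compound matrix `(A, I_n)` after swapping columns `i, j` of `A` with
columns `i, j` of the identity: its right block. -/
def swapRight {n : ℕ} (A : Matrix (Fin n) (Fin n) ℝ) (i j : Fin n) :
    Matrix (Fin n) (Fin n) ℝ :=
  Matrix.of fun r c => if c = i ∨ c = j then A r c else (if r = c then 1 else 0)

/-- The sign `ρ_k`, equal to `−1` for `i ≤ k < j` and `+1` otherwise. -/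
noncomputable def rhoSign {n : ℕ} (i j k : Fin n) : ℝ := if i ≤ k ∧ k < j then -1 else 1

/-- flip membership of `k` in `T` -/
def pfFl {n : ℕ} (T : Finset (Fin n)) (k : Fin n) : Finset (Fin n) := symmDiff T {k}

lemma mem_pfFl {n : ℕ} (T : Finset (Fin n)) (k x : Fin n) :
    x ∈ pfFl T k ↔ ¬ (x ∈ T ↔ x = k) := by
  simp only [pfFl, Finset.mem_symmDiff, Finset.mem_singleton]; tauto

lemma pfFl_comm {n : ℕ} (T : Finset (Fin n)) (k l : Fin n) :
    pfFl (pfFl T k) l = pfFl (pfFl T l) k := by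
  ext x; simp only [mem_pfFl]; tauto

lemma pfFl_self {n : ℕ} (T : Finset (Fin n)) (k : Fin n) :
    pfFl (pfFl T k) k = T := by
  ext x; simp only [mem_pfFl]; tauto

lemma pfFl_insert {n : ℕ} (T : Finset (Fin n)) (k : Fin n) (h : k ∉ T) :
    pfFl T k = insert k T := by
  ext x; simp only [mem_pfFl, Finset.mem_insert]
  by_cases hx : x = k
  · subst hx; tauto
  · tauto

lemma pfFl_erase {n : ℕ} (T : Finset (Fin n)) (k : Fin n) (h : k ∈ T) :
    pfFl T k = T.erase k := by
  ext x; simp only [mem_pfFl, Finset.mem_erase]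
  by_cases hx : x = k
  · subst hx; tauto
  · tauto

noncomputable def pfSg {n : ℕ} (k : Fin n) (T : Finset (Fin n)) : ℝ :=
  (-1) ^ (T.filter (· < k)).card

lemma pfSg_sq {n : ℕ} (k : Fin n) (T : Finset (Fin n)) : pfSg k T * pfSg k T = 1 := by
  unfold pfSg; rw [← mul_pow]; simp

lemma pfSg_insert {n : ℕ} (k l : Fin n) (T : Finset (Fin n)) (h : l ∉ T) :
    pfSg k (insert l T) = (if l < k then -1 else 1) * pfSg k T := by
  unfold pfSg
  rw [Finset.filter_insert]
  split_ifs with hl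
  · rw [Finset.card_insert_of_notMem (by simp [h]), pow_succ]; ring
  · ring

lemma pfSg_fl {n : ℕ} (k l : Fin n) (T : Finset (Fin n)) :
    pfSg k (pfFl T l) = (if l < k then -1 else 1) * pfSg k T := by
  by_cases h : l ∈ T
  · have h2 := pfSg_insert k l (pfFl T l) (by rw [mem_pfFl]; tauto)
    rw [← pfFl_insert _ _ (by rw [mem_pfFl]; tauto), pfFl_self] at h2
    rw [h2]; split_ifs <;> ring
  · rw [pfFl_insert _ _ h, pfSg_insert _ _ _ h]

noncomputable def pfP {n : ℕ} (k : Fin n) : Module.End ℝ (Finset (Fin n) → ℝ) where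
  toFun f T := if k ∈ T then 0 else pfSg k T * f (pfFl T k)
  map_add' f g := by ext T; simp only [Pi.add_apply]; split_ifs <;> ring
  map_smul' c f := by
    ext T; simp only [Pi.smul_apply, smul_eq_mul, RingHom.id_apply]; split_ifs <;> ring

noncomputable def pfM {n : ℕ} (k : Fin n) : Module.End ℝ (Finset (Fin n) → ℝ) where
  toFun f T := if k ∈ T then pfSg k T * f (pfFl T k) else 0
  map_add' f g := by ext T; simp only [Pi.add_apply]; split_ifs <;> ring
  map_smul' c f := by
    ext T; simp only [Pi.smul_apply, smul_eq_mul, RingHom.id_apply]; split_ifs <;> ring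

lemma pfP_apply {n : ℕ} (k : Fin n) (f : Finset (Fin n) → ℝ) (T : Finset (Fin n)) :
    pfP k f T = if k ∈ T then 0 else pfSg k T * f (pfFl T k) := rfl

lemma pfM_apply {n : ℕ} (k : Fin n) (f : Finset (Fin n) → ℝ) (T : Finset (Fin n)) :
    pfM k f T = if k ∈ T then pfSg k T * f (pfFl T k) else 0 := rfl

lemma pfPP {n : ℕ} (k l : Fin n) : pfP k * pfP l + pfP l * pfP k = 0 := by
  refine LinearMap.ext fun f => funext fun T => ?_
  simp only [LinearMap.add_apply, Module.End.mul_apply, Pi.add_apply, pfP_apply, mem_pfFl,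
    pfSg_fl, pfFl_comm T l k, LinearMap.zero_apply, Pi.zero_apply]
  rcases lt_trichotomy k l with h | h | h
  · have := h.ne; have := h.ne'; have := h.not_gt
    by_cases hk : k ∈ T <;> by_cases hl : l ∈ T <;> simp [*] <;> ring
  · subst h; by_cases hk : k ∈ T <;> simp [*]
  · have := h.ne; have := h.ne'; have := h.not_gt
    by_cases hk : k ∈ T <;> by_cases hl : l ∈ T <;> simp [*] <;> ring

lemma pfMM {n : ℕ} (k l : Fin n) : pfM k * pfM l + pfM l * pfM k = 0 := by
  refine LinearMap.ext fun f => funext fun T => ?_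
  simp only [LinearMap.add_apply, Module.End.mul_apply, Pi.add_apply, pfM_apply, mem_pfFl,
    pfSg_fl, pfFl_comm T l k, LinearMap.zero_apply, Pi.zero_apply]
  rcases lt_trichotomy k l with h | h | h
  · have := h.ne; have := h.ne'; have := h.not_gt
    by_cases hk : k ∈ T <;> by_cases hl : l ∈ T <;> simp [*] <;> ring
  · subst h; by_cases hk : k ∈ T <;> simp [*]
  · have := h.ne; have := h.ne'; have := h.not_gt
    by_cases hk : k ∈ T <;> by_cases hl : l ∈ T <;> simp [*] <;> ring

lemma pfPM {n : ℕ} (k l : Fin n) : pfP k * pfM l + pfM l * pfP k = if k = l then 1 else 0 := by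
  refine LinearMap.ext fun f => funext fun T => ?_
  rcases lt_trichotomy k l with h | h | h
  · have := h.ne; have := h.ne'; have := h.not_gt
    simp only [LinearMap.add_apply, Module.End.mul_apply, Pi.add_apply, pfM_apply, pfP_apply,
      mem_pfFl, pfSg_fl, pfFl_comm T l k]
    by_cases hk : k ∈ T <;> by_cases hl : l ∈ T <;> simp [*] <;> ring
  · subst h
    simp only [LinearMap.add_apply, Module.End.mul_apply, Pi.add_apply, pfM_apply, pfP_apply,
      mem_pfFl, pfSg_fl, pfFl_self]
    by_cases hk : k ∈ T <;> simp [*, ← mul_assoc, pfSg_sq]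
  · have := h.ne; have := h.ne'; have := h.not_gt
    simp only [LinearMap.add_apply, Module.End.mul_apply, Pi.add_apply, pfM_apply, pfP_apply,
      mem_pfFl, pfSg_fl, pfFl_comm T l k]
    by_cases hk : k ∈ T <;> by_cases hl : l ∈ T <;> simp [*] <;> ring

noncomputable def pfD {n : ℕ} (A : Matrix (Fin n) (Fin n) ℝ) (k : Fin n) :
    Module.End ℝ (Finset (Fin n) → ℝ) := pfP k - ∑ l, A k l • pfM l

lemma pfD_apply {n : ℕ} (A : Matrix (Fin n) (Fin n) ℝ) (k : Fin n)
    (f : Finset (Fin n) → ℝ) (T : Finset (Fin n)) :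
    pfD A k f T = pfP k f T - ∑ l, A k l * pfM l f T := by
  simp [pfD, LinearMap.sum_apply, Finset.sum_apply]

lemma pfDD {n : ℕ} (A : Matrix (Fin n) (Fin n) ℝ) (hA : ∀ k l, A l k = - A k l) (k m : Fin n) :
    pfD A k * pfD A m + pfD A m * pfD A k = 0 := by
  have h1 : ∀ k m : Fin n, pfP k * (∑ l, A m l • pfM l) + (∑ l, A m l • pfM l) * pfP k
      = A m k • (1 : Module.End ℝ (Finset (Fin n) → ℝ)) := by
    intro k m
    rw [Finset.mul_sum, Finset.sum_mul, ← Finset.sum_add_distrib]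
    simp only [mul_smul_comm, smul_mul_assoc, ← smul_add, pfPM]
    simp
  have h2 : (∑ l, A k l • pfM l) * (∑ l, A m l • pfM l) +
      (∑ l, A m l • pfM l) * (∑ l, A k l • pfM l) = 0 := by
    rw [Finset.sum_mul_sum, Finset.sum_mul_sum, Finset.sum_comm, ← Finset.sum_add_distrib]
    refine Finset.sum_eq_zero fun x _ => ?_
    rw [← Finset.sum_add_distrib]
    refine Finset.sum_eq_zero fun y _ => ?_
    rw [smul_mul_smul_comm, smul_mul_smul_comm, mul_comm (A m x), ← smul_add, pfMM, smul_zero]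
  have e1 := h1 k m
  have e2 := h1 m k
  have e3 := pfPP k m
  unfold pfD
  set X := ∑ l, A k l • pfM l
  set Y := ∑ l, A m l • pfM l
  have : (pfP k - X) * (pfP m - Y) + (pfP m - Y) * (pfP k - X) =
    (pfP k * pfP m + pfP m * pfP k) - (pfP k * Y + Y * pfP k) - (pfP m * X + X * pfP m)
      + (X * Y + Y * X) := by
    simp only [sub_mul, mul_sub]; abel
  have e4 : A m k • (1 : Module.End ℝ (Finset (Fin n) → ℝ)) = -(A k m • 1) := by
    have h5 : A m k = - A k m := hA k m
    rw [h5]; exact neg_smul (A k m) (1 : Module.End ℝ (Finset (Fin n) → ℝ))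
  rw [this, e1, e2, e3, h2, e4]
  abel

/-- The expansion along an arbitrary row, from the expansion along the smallest row. -/
lemma pf_annihilate {n : ℕ} (A : Matrix (Fin n) (Fin n) ℝ) (hA : ∀ k l, A l k = - A k l)
    (f : Finset (Fin n) → ℝ)
    (hf : ∀ k T, (∀ t ∈ T, k < t) → pfD A k f T = 0) :
    ∀ (N : ℕ) (T : Finset (Fin n)), T.card = N → ∀ k, pfD A k f T = 0 := by
  intro N
  induction N using Nat.strong_induction_on with
  | _ N ih =>
  intro T hT k
  by_cases hk : ∀ t ∈ T, k < t
  · exact hf k T hk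
  have hne : T.Nonempty := by
    by_contra h
    rw [Finset.not_nonempty_iff_eq_empty] at h
    subst h; simp at hk
  set m := T.min' hne with hm
  have hmT : m ∈ T := T.min'_mem hne
  have hmk : m ≤ k := by
    push Not at hk
    obtain ⟨t, ht, htk⟩ := hk
    exact (T.min'_le t ht).trans htk
  set T' := pfFl T m with hT'
  have hT'e : T' = T.erase m := pfFl_erase _ _ hmT
  have hlt : ∀ t ∈ T', m < t := by
    intro t ht
    rw [hT'e, Finset.mem_erase] at ht
    exact lt_of_le_of_ne (T.min'_le t ht.2) (Ne.symm ht.1)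
  have hmT' : m ∉ T' := fun h => lt_irrefl _ (hlt m h)
  have hcard : T'.card < N := by
    rw [hT'e, ← hT]; exact Finset.card_erase_lt_of_mem hmT
  have hs : pfSg m T' = 1 := by
    unfold pfSg
    rw [Finset.filter_false_of_mem (fun t ht => (hlt t ht).not_gt)]; simp
  -- P_m D_k f
  have e1 : pfP m (pfD A k f) T' = pfD A k f T := by
    rw [pfP_apply, if_neg hmT', hs, one_mul, hT', pfFl_self]
  have e2 : pfD A m (pfD A k f) T' = pfD A k f T := by
    rw [pfD_apply, e1, Finset.sum_eq_zero, sub_zero]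
    intro l _
    rw [pfM_apply]
    split_ifs with h
    · rw [ih _ _ (pfFl T' l) rfl k]; · simp
      rw [pfFl_erase _ _ h]
      exact (Finset.card_erase_lt_of_mem h).trans hcard
    · simp
  have e3 : pfD A k (pfD A m f) T' + pfD A m (pfD A k f) T' = 0 := by
    have := congrFun (LinearMap.congr_fun (pfDD A hA k m) f) T'
    simpa using this
  rcases hmk.eq_or_lt with h | h
  · rw [← h] at e3 e2 ⊢
    linarith
  · have e4 : pfD A k (pfD A m f) T' = 0 := by
      rw [pfD_apply, pfP_apply, Finset.sum_eq_zero]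
      · split_ifs with hkT
        · simp
        · rw [hf m]; · simp
          intro t ht
          rw [pfFl_insert _ _ hkT, Finset.mem_insert] at ht
          rcases ht with rfl | ht
          · exact h
          · exact hlt t ht
      · intro l _
        rw [pfM_apply]
        split_ifs with hl
        · rw [hf m]; · simp
          intro t ht
          rw [pfFl_erase _ _ hl] at ht
          exact hlt t (Finset.mem_of_mem_erase ht)
        · simp
    linarith

/-- Uniqueness. -/
lemma pf_unique {n : ℕ} (C : Matrix (Fin n) (Fin n) ℝ) (f g : Finset (Fin n) → ℝ)
    (h0 : f ∅ = g ∅)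
    (hf : ∀ k T, (∀ t ∈ T, k < t) → pfD C k f T = 0)
    (hg : ∀ k T, (∀ t ∈ T, k < t) → pfD C k g T = 0) :
    ∀ (N : ℕ) (T : Finset (Fin n)), T.card = N → f T = g T := by
  intro N
  induction N using Nat.strong_induction_on with
  | _ N ih =>
  intro T hT
  rcases T.eq_empty_or_nonempty with rfl | hne
  · exact h0
  set m := T.min' hne with hm
  have hmT : m ∈ T := T.min'_mem hne
  set T' := pfFl T m with hT'
  have hT'e : T' = T.erase m := pfFl_erase _ _ hmT
  have hlt : ∀ t ∈ T', m < t := by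
    intro t ht
    rw [hT'e, Finset.mem_erase] at ht
    exact lt_of_le_of_ne (T.min'_le t ht.2) (Ne.symm ht.1)
  have hmT' : m ∉ T' := fun h => lt_irrefl _ (hlt m h)
  have hcard : T'.card < N := by
    rw [hT'e, ← hT]; exact Finset.card_erase_lt_of_mem hmT
  have hs : pfSg m T' = 1 := by
    unfold pfSg
    rw [Finset.filter_false_of_mem (fun t ht => (hlt t ht).not_gt)]; simp
  have e1 : ∀ f : Finset (Fin n) → ℝ, pfP m f T' = f T := by
    intro f; rw [pfP_apply, if_neg hmT', hs, one_mul, hT', pfFl_self]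
  have e2 : ∀ l, pfM l f T' = pfM l g T' := by
    intro l
    rw [pfM_apply, pfM_apply]
    split_ifs with h
    · rw [ih _ _ (pfFl T' l) rfl]
      rw [pfFl_erase _ _ h]
      exact (Finset.card_erase_lt_of_mem h).trans hcard
    · rfl
  have a1 := hf m T' hlt
  have a2 := hg m T' hlt
  rw [pfD_apply, e1] at a1 a2
  simp only [e2] at a1
  linarith

/-- The particle-hole transform. -/
lemma pf_exchange {n : ℕ} (A B : Matrix (Fin n) (Fin n) ℝ)
    (hA : ∀ k l, A l k = - A k l) (i j : Fin n) (hij : i < j) (ha : A i j ≠ 0)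
    (hB : swapRight A i j * B = swapLeft A i j) (f : Finset (Fin n) → ℝ)
    (hf : ∀ T k, pfD A k f T = 0) (k : Fin n) (T : Finset (Fin n)) :
    pfD (Matrix.of fun k l => rhoSign i j k * rhoSign i j l * B k l) k
      (fun S => f (pfFl (pfFl S i) j)) T = 0 := by
  set g : Finset (Fin n) → ℝ := fun S => f (pfFl (pfFl S i) j) with hg
  set U := pfFl (pfFl T i) j with hU
  have hne := hij.ne
  have hne' := hij.ne'
  have hng := hij.not_gt
  have rsq : ∀ k, rhoSign i j k * rhoSign i j k = 1 := by
    intro k; unfold rhoSign; split_ifs <;> norm_num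
  have memU : ∀ l, l ≠ i → l ≠ j → (l ∈ U ↔ l ∈ T) := by
    intro l h1 h2; simp only [hU, mem_pfFl]; tauto
  have sgU : ∀ l, l ≠ i → l ≠ j → pfSg l T = rhoSign i j l * pfSg l U := by
    intro l h1 h2
    rw [hU, pfSg_fl, pfSg_fl, rhoSign]
    rcases lt_or_gt_of_ne h1 with a | a <;> rcases lt_or_gt_of_ne h2 with b | b
    · simp [b, a.not_gt, b.not_gt, a.not_ge]
    · exact absurd (a.trans hij) b.not_gt
    · simp [a, b, b.not_gt, a.le]
    · simp [a, b, b.not_gt, a.le]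
  have flU : ∀ l, pfFl (pfFl (pfFl T l) i) j = pfFl U l := by
    intro l; rw [hU, pfFl_comm T l i, pfFl_comm _ l j]
  have hiU : i ∈ U ↔ i ∉ T := by simp only [hU, mem_pfFl]; tauto
  have hjU : j ∈ U ↔ j ∉ T := by simp only [hU, mem_pfFl]; tauto
  have siU : pfSg i T = pfSg i U := by
    rw [hU, pfSg_fl, pfSg_fl]; simp [hng]
  have sjU : pfSg j T = - pfSg j U := by
    rw [hU, pfSg_fl, pfSg_fl]; simp [hij]
  have ri : rhoSign i j i = -1 := by simp [rhoSign, hij]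
  have rj : rhoSign i j j = 1 := by simp [rhoSign]
  -- transformed vectors
  set u' : Fin n → ℝ := fun l => rhoSign i j l * pfM l g T with hu'
  set v' : Fin n → ℝ := fun l => rhoSign i j l * pfP l g T with hv'
  have hu1 : ∀ l, u' l = if l = i ∨ l = j then - pfP l f U else pfM l f U := by
    intro l
    simp only [hu', pfM_apply, pfP_apply, hg, flU]
    by_cases h1 : l = i
    · subst h1; by_cases h : l ∈ T <;> simp [ri, siU, hiU, h]
    by_cases h2 : l = j
    · subst h2; by_cases h : l ∈ T <;> simp [rj, sjU, hjU, h]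
    simp only [h1, h2, or_self, if_false, memU l h1 h2, sgU l h1 h2]
    split_ifs
    · rw [← mul_assoc, ← mul_assoc, rsq, one_mul]
    · simp
  have hv1 : ∀ l, v' l = if l = i ∨ l = j then - pfM l f U else pfP l f U := by
    intro l
    simp only [hv', pfM_apply, pfP_apply, hg, flU]
    by_cases h1 : l = i
    · subst h1; by_cases h : l ∈ T <;> simp [ri, siU, hiU, h]
    by_cases h2 : l = j
    · subst h2; by_cases h : l ∈ T <;> simp [rj, sjU, hjU, h]
    simp only [h1, h2, or_self, if_false, memU l h1 h2, sgU l h1 h2]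
    split_ifs
    · simp
    · rw [← mul_assoc, ← mul_assoc, rsq, one_mul]
  have hlin : (swapRight A i j).mulVec v' = (swapLeft A i j).mulVec u' := by
    ext r
    have h := hf U r
    rw [pfD_apply] at h
    simp only [Matrix.mulVec, dotProduct, swapRight, swapLeft, Matrix.of_apply]
    rw [← sub_eq_zero, ← Finset.sum_sub_distrib]
    have : ∀ l, ((if l = i ∨ l = j then A r l else if r = l then 1 else 0) * v' l -
       (if l = i ∨ l = j then if r = l then 1 else 0 else A r l) * u' l) =
       (if r = l then pfP l f U else 0) - A r l * pfM l f U := by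
      intro l
      rw [hu1, hv1]
      split_ifs <;> ring
    simp only [this]
    rw [Finset.sum_sub_distrib]
    simpa using h
  set w : Fin n → ℝ := v' - B.mulVec u' with hw
  have hw0 : (swapRight A i j).mulVec w = 0 := by
    rw [hw, Matrix.mulVec_sub, Matrix.mulVec_mulVec, hB, hlin, sub_self]
  have hrow : ∀ r, A r i * w i + A r j * w j + (if r = i ∨ r = j then 0 else w r) = 0 := by
    intro r
    have h := congrFun hw0 r
    simp only [Matrix.mulVec, dotProduct, swapRight, Matrix.of_apply, Pi.zero_apply] at h
    have : ∀ l, (if l = i ∨ l = j then A r l else if r = l then 1 else 0) * w l =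
      (if l = i then A r i * w i else 0) + (if l = j then A r j * w j else 0) +
      (if r = l then (if r = i ∨ r = j then 0 else w r) else 0) := by
      intro l
      by_cases h1 : l = i
      · subst h1; simp [hne]
        intro h h'; tauto
      by_cases h2 : l = j
      · subst h2; simp [hne']
        intro h h'; tauto
      by_cases h3 : r = l
      · subst h3; simp [h1, h2]
      · simp [h1, h2, h3]
    simp only [this, Finset.sum_add_distrib] at h
    simpa using h
  have hdiag : ∀ r, A r r = 0 := fun r => by linarith [hA r r]
  have hwj : w j = 0 := by
    have := hrow i
    simpa [hdiag, ha] using this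
  have hwi : w i = 0 := by
    have := hrow j
    simpa [hdiag, hA i j, ha] using this
  have hwk : w k = 0 := by
    by_cases h1 : k = i
    · rw [h1, hwi]
    by_cases h2 : k = j
    · rw [h2, hwj]
    have := hrow k
    simpa [h1, h2, hwi, hwj] using this
  rw [pfD_apply]
  have h3 : v' k = ∑ l, B k l * u' l := by
    have : v' k - ∑ l, B k l * u' l = 0 := hwk
    linarith
  have h4 : pfP k g T = rhoSign i j k * v' k := by
    simp only [hv']; rw [← mul_assoc, rsq, one_mul]
  rw [h4, h3, Finset.mul_sum, ← Finset.sum_sub_distrib]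
  refine Finset.sum_eq_zero fun l _ => ?_
  simp only [hu', Matrix.of_apply]; ring

open Equiv.Perm in
/-- the permutation with `0 ↦ 0`, `1 ↦ l+1`, `x+2 ↦ l.succAbove (e x) + 1` -/
def pfMk {N : ℕ} (l : Fin (N + 1)) (e : Equiv.Perm (Fin N)) : Equiv.Perm (Fin (N + 2)) :=
  decomposeFin.symm (0, l.cycleRange.symm * decomposeFin.symm (0, e))

lemma pfMk_zero {N : ℕ} (l : Fin (N + 1)) (e : Equiv.Perm (Fin N)) : pfMk l e 0 = 0 := by
  simp [pfMk]

lemma pfMk_one {N : ℕ} (l : Fin (N + 1)) (e : Equiv.Perm (Fin N)) :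
    pfMk l e (Fin.succ 0) = l.succ := by
  rw [pfMk, Equiv.Perm.decomposeFin_symm_apply_succ]
  simp

lemma pfMk_succ {N : ℕ} (l : Fin (N + 1)) (e : Equiv.Perm (Fin N)) (x : Fin N) :
    pfMk l e x.succ.succ = (l.succAbove (e x)).succ := by
  rw [pfMk, Equiv.Perm.decomposeFin_symm_apply_succ, Equiv.Perm.mul_apply,
    Equiv.Perm.decomposeFin_symm_apply_succ]
  simp

lemma pfMk_sign {N : ℕ} (l : Fin (N + 1)) (e : Equiv.Perm (Fin N)) :
    ((Equiv.Perm.sign (pfMk l e) : ℤ) : ℝ) = (-1) ^ (l : ℕ) * ((Equiv.Perm.sign e : ℤ) : ℝ) := by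
  rw [pfMk, Equiv.Perm.decomposeFin.symm_sign, Equiv.Perm.sign_mul,
    Equiv.Perm.decomposeFin.symm_sign, Equiv.Perm.sign_symm, Fin.sign_cycleRange]
  simp

lemma pfMk_injective {N : ℕ} {l l' : Fin (N + 1)} {e e' : Equiv.Perm (Fin N)}
    (h : pfMk l e = pfMk l' e') : l = l' ∧ e = e' := by
  have h1 : l = l' := by
    have := congrArg (fun σ => σ (Fin.succ 0)) h
    simpa only [pfMk_one, Fin.succ_inj] using this
  subst h1
  refine ⟨rfl, Equiv.ext fun x => ?_⟩
  have := congrArg (fun σ => σ x.succ.succ) h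
  simpa only [pfMk_succ, Fin.succ_inj, Fin.succAbove_right_inj] using this

lemma pfMk_surj {N : ℕ} (σ : Equiv.Perm (Fin (N + 2))) (h0 : σ 0 = 0) :
    ∃ l e, pfMk l e = σ := by
  have key : ∀ (M : ℕ) (τ : Equiv.Perm (Fin (M + 1))), τ 0 = 0 →
      ∃ e, Equiv.Perm.decomposeFin.symm (0, e) = τ := by
    intro M τ hτ
    obtain ⟨⟨p, e⟩, hpe⟩ := Equiv.Perm.decomposeFin.symm.surjective τ
    have : p = 0 := by
      rw [← hpe, Equiv.Perm.decomposeFin_symm_apply_zero] at hτ; exact hτ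
    subst this
    exact ⟨e, hpe⟩
  obtain ⟨τ, hτ⟩ := key _ σ h0
  obtain ⟨e, he⟩ := key _ ((τ 0).cycleRange * τ) (by simp)
  refine ⟨τ 0, e, ?_⟩
  rw [pfMk, he, ← hτ]
  congr 2
  ext x
  simp

lemma pfMk_mem {N : ℕ} (l : Fin (N + 1)) (e : Equiv.Perm (Fin N)) :
    (∀ p q : Fin (N + 2), 2 ∣ (p : ℕ) → p ≤ q → pfMk l e p ≤ pfMk l e q) ↔
    (∀ p q : Fin N, 2 ∣ (p : ℕ) → p ≤ q → e p ≤ e q) := by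
  constructor
  · intro h p q hp hpq
    have := h p.succ.succ q.succ.succ (by simp only [Fin.val_succ]; omega) (by simpa using hpq)
    rw [pfMk_succ, pfMk_succ, Fin.succ_le_succ_iff,
      (Fin.strictMono_succAbove l).le_iff_le] at this
    exact this
  · intro h p q hp hpq
    induction p using Fin.cases with
    | zero => rw [pfMk_zero]; exact Fin.zero_le _
    | succ p =>
      induction p using Fin.cases with
      | zero => simp at hp
      | succ p =>
        induction q using Fin.cases with
        | zero => simp at hpq
        | succ q =>
          induction q using Fin.cases with
          | zero => simp [Fin.le_def] at hpq
          | succ q =>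
            rw [pfMk_succ, pfMk_succ, Fin.succ_le_succ_iff,
              (Fin.strictMono_succAbove l).le_iff_le]
            refine h p q ?_ (by simpa using hpq)
            simp only [Fin.val_succ] at hp; omega

lemma pf_prod_aux {M K : ℕ} (h : M = K + 1) (F : Fin M → ℝ) :
    ∏ k, F k = F ⟨0, by omega⟩ * ∏ k : Fin K, F ⟨k + 1, by have := k.2; omega⟩ := by
  subst h
  rw [Fin.prod_univ_succ]; rfl

lemma pfaffian_expand {N : ℕ} (A : Matrix (Fin (N + 2)) (Fin (N + 2)) ℝ) :
    pfaffian A = ∑ l : Fin (N + 1), (-1) ^ (l : ℕ) * A 0 l.succ *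
      pfaffian (Matrix.of fun p q : Fin N => A (l.succAbove p).succ (l.succAbove q).succ) := by
  by_cases hN : 2 ∣ N
  · have hN2 : 2 ∣ N + 2 := by omega
    simp only [pfaffian, dif_pos hN, dif_pos hN2, Finset.mul_sum]
    rw [← Finset.sum_product']
    symm
    refine Finset.sum_bij (fun x _ => pfMk x.1 x.2) ?_ ?_ ?_ ?_
    · rintro ⟨l, e⟩ h
      simp only [Finset.mem_product, Finset.mem_filter, Finset.mem_univ, true_and] at h ⊢
      rwa [pfMk_mem]
    · rintro ⟨l, e⟩ _ ⟨l', e'⟩ _ h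
      obtain ⟨h1, h2⟩ := pfMk_injective h
      exact Prod.ext h1 h2
    · intro σ hσ
      simp only [Finset.mem_filter, Finset.mem_univ, true_and] at hσ
      have h0 : σ 0 = 0 := by
        have := hσ 0 (σ.symm 0) (by simp) (Fin.zero_le _)
        simpa using this
      obtain ⟨l, e, rfl⟩ := pfMk_surj σ h0
      refine ⟨(l, e), ?_, rfl⟩
      simp only [Finset.mem_product, Finset.mem_filter, Finset.mem_univ, true_and]
      rwa [pfMk_mem] at hσ
    · rintro ⟨l, e⟩ _
      rw [pfMk_sign, pf_prod_aux (M := (N + 2) / 2) (K := N / 2) (by omega)]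
      have a0 : pfMk l e ⟨2 * 0, by omega⟩ = 0 := pfMk_zero l e
      have a1 : pfMk l e ⟨2 * 0 + 1, by omega⟩ = l.succ := pfMk_one l e
      have a2 : ∀ k : Fin (N / 2), A (pfMk l e ⟨2 * ((k : ℕ) + 1), by have := k.2; omega⟩)
          (pfMk l e ⟨2 * ((k : ℕ) + 1) + 1, by have := k.2; omega⟩) =
          A (l.succAbove (e ⟨2 * (k : ℕ), by have := k.2; omega⟩)).succ
            (l.succAbove (e ⟨2 * (k : ℕ) + 1, by have := k.2; omega⟩)).succ := by
        intro k
        rw [← pfMk_succ, ← pfMk_succ]; rfl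
      simp only [a0, a1, a2, Matrix.of_apply]
      ring
  · have hN2 : ¬ 2 ∣ N + 2 := by omega
    simp [pfaffian, hN, hN2]

lemma pfMinor_eq_s15 {n N : ℕ} (A : Matrix (Fin n) (Fin n) ℝ) (S : Finset (Fin n)) (h : S.card = N)
    (φ : Fin N → Fin n) (hφ : ∀ x, φ x ∈ S) (hm : StrictMono φ) :
    pfMinor A S = pfaffian (Matrix.of fun p q : Fin N => A (φ p) (φ q)) := by
  subst h
  rw [Finset.orderEmbOfFin_unique rfl hφ hm]
  rfl

lemma pfMinor_odd {n : ℕ} (A : Matrix (Fin n) (Fin n) ℝ) (S : Finset (Fin n))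
    (h : ¬ 2 ∣ S.card) : pfMinor A S = 0 := by
  rw [pfMinor, pfaffian, dif_neg h]

lemma pfMinor_empty {n : ℕ} (A : Matrix (Fin n) (Fin n) ℝ) : pfMinor A ∅ = 1 := by
  rw [pfMinor_eq_s15 A ∅ (N := 0) rfl Fin.elim0 (fun x => x.elim0) (fun x => x.elim0)]
  simp [pfaffian]

lemma pfMinor_row {n : ℕ} (A : Matrix (Fin n) (Fin n) ℝ) (k : Fin n) (T : Finset (Fin n))
    (hk : ∀ t ∈ T, k < t) : pfD A k (pfMinor A) T = 0 := by
  have hkT : k ∉ T := fun h => lt_irrefl _ (hk k h)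
  have hs : pfSg k T = 1 := by
    unfold pfSg
    rw [Finset.filter_false_of_mem (fun t ht => (hk t ht).not_gt)]; simp
  rw [pfD_apply, pfP_apply, if_neg hkT, hs, one_mul, sub_eq_zero, pfFl_insert _ _ hkT]
  have hcard := Finset.card_insert_of_notMem hkT
  by_cases hT : 2 ∣ T.card
  · rw [pfMinor_odd _ _ (by omega)]
    symm
    refine Finset.sum_eq_zero fun l _ => ?_
    rw [pfM_apply]
    split_ifs with hl
    · have := Finset.card_erase_add_one hl
      rw [pfFl_erase _ _ hl, pfMinor_odd _ _ (by omega)]; simp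
    · simp
  obtain ⟨N, hN⟩ : ∃ N, T.card = N + 1 := ⟨T.card - 1, by omega⟩
  set φ := T.orderEmbOfFin hN with hφ
  have hφT : ∀ x, φ x ∈ T := fun x => T.orderEmbOfFin_mem hN x
  rw [pfMinor_eq_s15 A (insert k T) (N := N + 2) (by omega) (Fin.cons k φ : Fin (N + 2) → Fin n),
    pfaffian_expand]
  · have hsum : ∑ l, A k l * pfM l (pfMinor A) T =
        ∑ l ∈ T, A k l * pfM l (pfMinor A) T := by
      symm
      refine Finset.sum_subset (Finset.subset_univ _) fun l _ hl => ?_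
      rw [pfM_apply, if_neg hl, mul_zero]
    have hmap : ∑ l ∈ T, A k l * pfM l (pfMinor A) T =
        ∑ x : Fin (N + 1), A k (φ x) * pfM (φ x) (pfMinor A) T := by
      conv_lhs => rw [← T.map_orderEmbOfFin_univ hN, Finset.sum_map]
      rw [T.map_orderEmbOfFin_univ hN]; rfl
    rw [hsum, hmap]
    refine Finset.sum_congr rfl fun x _ => ?_
    have hsg : pfSg (φ x) T = (-1) ^ (x : ℕ) := by
      unfold pfSg
      congr 1
      have : T.filter (· < φ x) = (Finset.Iio x).map φ.toEmbedding := by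
        ext t
        simp only [Finset.mem_filter, Finset.mem_map, Finset.mem_Iio]
        constructor
        · rintro ⟨h1, h2⟩
          have : t ∈ Set.range φ := by rw [hφ, T.range_orderEmbOfFin]; exact h1
          obtain ⟨y, rfl⟩ := this
          exact ⟨y, φ.lt_iff_lt.1 h2, rfl⟩
        · rintro ⟨y, hy, rfl⟩
          exact ⟨hφT y, φ.lt_iff_lt.2 hy⟩
      rw [this, Finset.card_map, Fin.card_Iio]
    rw [pfM_apply, if_pos (hφT x), hsg, pfFl_erase _ _ (hφT x)]
    rw [pfMinor_eq_s15 A (T.erase (φ x)) (N := N)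
      (by rw [Finset.card_erase_of_mem (hφT x), hN]; rfl) (fun y => φ (x.succAbove y))]
    · simp only [Matrix.of_apply, Fin.cons_zero, Fin.cons_succ]; ring
    · intro y
      rw [Finset.mem_erase]
      exact ⟨fun h => Fin.succAbove_ne x y (φ.injective h), hφT _⟩
    · exact φ.strictMono.comp (Fin.strictMono_succAbove x)
  · intro x
    induction x using Fin.cases with
    | zero => simp
    | succ x => simp [hφT x]
  · intro x y hxy
    induction y using Fin.cases with
    | zero => simp at hxy
    | succ y =>
      induction x using Fin.cases with
      | zero => simpa using hk _ (hφT y)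
      | succ x => simpa using hxy

lemma pfMinor_pair {n : ℕ} (A : Matrix (Fin n) (Fin n) ℝ) (i j : Fin n) (hij : i < j) :
    pfMinor A {i, j} = A i j := by
  have h := pfMinor_row A i {j} (by simpa using hij)
  have hs : pfSg i {j} = 1 := by simp [pfSg, Finset.filter_singleton, hij.not_gt]
  have hs' : pfSg j {j} = 1 := by simp [pfSg, Finset.filter_singleton]
  have hi : i ∉ ({j} : Finset (Fin n)) := by simpa using hij.ne
  rw [pfD_apply, pfP_apply, if_neg hi, hs, one_mul, pfFl_insert _ _ hi,
    Finset.sum_eq_single j, pfM_apply, if_pos (by simp), hs',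
    pfFl_erase _ _ (by simp)] at h
  · simp [pfMinor_empty] at h
    linarith
  · intro l _ hl
    simp [pfM_apply, hl]
  · simp

lemma pf_main {n : ℕ} (A B : Matrix (Fin n) (Fin n) ℝ)
    (hA : A.transpose = -A) (i j : Fin n) (hij : i < j) (ha : A i j ≠ 0)
    (hB : swapRight A i j * B = swapLeft A i j) (S : Finset (Fin n)) :
    A i j * pfMinor (Matrix.of fun k l => rhoSign i j k * rhoSign i j l * B k l) S =
      pfMinor A (symmDiff S {i, j}) := by
  have hA' : ∀ k l, A l k = - A k l := fun k l => congrFun (congrFun hA k) l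
  set C : Matrix (Fin n) (Fin n) ℝ := Matrix.of fun k l => rhoSign i j k * rhoSign i j l * B k l
  have hS : ∀ S : Finset (Fin n), pfFl (pfFl S i) j = symmDiff S {i, j} := by
    intro S
    ext x
    simp only [mem_pfFl, Finset.mem_symmDiff, Finset.mem_insert, Finset.mem_singleton]
    have : ¬ (x = i ∧ x = j) := fun h => hij.ne (h.1.symm.trans h.2)
    tauto
  have key := pf_unique C (A i j • pfMinor C) (fun S => pfMinor A (pfFl (pfFl S i) j))
    (by
      simp only [hS, Pi.smul_apply, pfMinor_empty, smul_eq_mul, mul_one]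
      rw [← Finset.bot_eq_empty, bot_symmDiff, pfMinor_pair A i j hij])
    (by
      intro k T hk
      rw [map_smul, Pi.smul_apply, pfMinor_row C k T hk, smul_zero])
    (fun k T _ => pf_exchange A B hA' i j hij ha hB (pfMinor A)
      (fun T k => pf_annihilate A hA' _ (pfMinor_row A) _ T rfl k) k T)
    _ S rfl
  simpa [hS] using key

/-- The sign map obtained from a skew-symmetric real matrix is invariant under
basis change up to global sign: if `A` is skew-symmetric with `a_{ij} ≠ 0` (`i < j`)
and `C` is the matrix obtained by the column-exchange-and-sign-change construction
at `{i, j}`, then the map `S ↦ sign Pf(C_S)` equals the map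
`S ↦ sign Pf(A_{S Δ {i,j}})` times the constant `sign(a_{ij})`; in particular the
two families of signs agree up to a single global sign. -/
theorem columnExchange_sign_invariance {n : ℕ} (A B : Matrix (Fin n) (Fin n) ℝ)
    (hA : A.transpose = -A) (i j : Fin n) (hij : i < j) (ha : A i j ≠ 0)
    (hB : swapRight A i j * B = swapLeft A i j) :
    (∀ S : Finset (Fin n),
      SignType.sign
          (pfMinor (Matrix.of fun k l => rhoSign i j k * rhoSign i j l * B k l) S) =
        SignType.sign (A i j) * SignType.sign (pfMinor A (symmDiff S {i, j}))) ∧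
    ∃ c : SignType, (c = 1 ∨ c = -1) ∧
      ∀ S : Finset (Fin n),
        SignType.sign
            (pfMinor (Matrix.of fun k l => rhoSign i j k * rhoSign i j l * B k l) S) =
          c * SignType.sign (pfMinor A (symmDiff S {i, j})) := by
  have h1 : ∀ S : Finset (Fin n),
      SignType.sign
          (pfMinor (Matrix.of fun k l => rhoSign i j k * rhoSign i j l * B k l) S) =
        SignType.sign (A i j) * SignType.sign (pfMinor A (symmDiff S {i, j})) := by
    intro S
    rw [← pf_main A B hA i j hij ha hB S, sign_mul, ← mul_assoc, ← sign_mul,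
      sign_pos (mul_self_pos.2 ha), one_mul]
  refine ⟨h1, SignType.sign (A i j), ?_, h1⟩
  rcases lt_or_gt_of_ne ha with h | h
  · exact Or.inr (sign_neg h)
  · exact Or.inl (sign_pos h)
end

section
/- Let B be a k×n real matrix of rank k and D an (n−k)×n real matrix of rank n−k with B·Dᵗ = 0. Then the k+(n−k) = n by 2n block matrix ((B, 0), (0, D)), with the left block columns indexed by I and the right block columns indexed by I*, has totally isotropic row space with respect to the standard symmetric hyperbolic form on ℝ^{2n}, and the admissible n-subsets of J indexing its nonzero n×n minors are exactly the sets (S ∪ (I \ S)*) where S ranges over the bases of the matroid represented by B. -/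
/-- The `k × k` minor of a `k × n` matrix `C` on a set `S` of column indices, taken
in increasing order: it is the determinant of the columns of `C` indexed by `S` if
`S` has cardinality `k`, and `0` otherwise. -/
noncomputable def colDet {k n : ℕ} (C : Matrix (Fin k) (Fin n) ℝ)
    (S : Finset (Fin n)) : ℝ :=
  if h : S.card = k then
    Matrix.det (Matrix.of fun i j : Fin k => C i ((S.orderIsoOfFin h j : S) : Fin n))
  else 0

/-- We model `J = {1,…,n, 1*,…,n*}` as `Fin n ⊕ Fin n`, with `Sum.inl i` the
unstarred element `i` and `Sum.inr i` the starred element `i*`.  A set `S ⊆ J` is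
**admissible** if `S ∩ S* = ∅`, `*` being the involution `Sum.swap`. -/
def JAdmissible {n : ℕ} (S : Finset (Fin n ⊕ Fin n)) : Prop :=
  ∀ x ∈ S, Sum.swap x ∉ S

/-- The property that the square minor of a matrix `C` with columns indexed by
`J = Fin n ⊕ Fin n` on the set `S` of column indices is nonzero (stated via an
arbitrary enumeration of `S`; the vanishing of the determinant does not depend on
the enumeration chosen). -/
def HasNonzeroMinor {m : Type*} [Fintype m] [DecidableEq m] {n : ℕ}
    (C : Matrix m (Fin n ⊕ Fin n) ℝ) (S : Finset (Fin n ⊕ Fin n)) : Prop :=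
  ∃ φ : m → Fin n ⊕ Fin n, Function.Injective φ ∧ Finset.univ.image φ = S ∧
    Matrix.det (Matrix.of fun i j : m => C i (φ j)) ≠ 0

open Matrix in
lemma det_ne_iff_aux {m J : Type*} [Fintype m] [DecidableEq m] (C : Matrix m J ℝ) (φ : m → J) :
    Matrix.det (Matrix.of fun i j : m => C i (φ j)) ≠ 0 ↔
      ∀ v : m → ℝ, (∀ j, (v ᵥ* C) (φ j) = 0) → v = 0 := by
  rw [Ne, ← Matrix.exists_vecMul_eq_zero_iff]
  push Not
  constructor
  · intro h v hv
    by_contra hne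
    exact h v hne (funext fun j => hv j)
  · intro h v hne hv
    exact hne (h v fun j => congrFun hv j)

open Matrix in
lemma hasNonzeroMinor_iff_aux {m : Type*} [Fintype m] [DecidableEq m] {n : ℕ}
    (C : Matrix m (Fin n ⊕ Fin n) ℝ) (S : Finset (Fin n ⊕ Fin n)) (hS : S.card = Fintype.card m) :
    HasNonzeroMinor C S ↔ ∀ v : m → ℝ, (∀ x ∈ S, (v ᵥ* C) x = 0) → v = 0 := by
  unfold HasNonzeroMinor
  constructor
  · rintro ⟨φ, _, rfl, h⟩ v hv
    rw [det_ne_iff_aux] at h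
    exact h v fun j => hv _ (by simp)
  · intro h
    have e : m ≃ S := Fintype.equivOfCardEq (by simp [hS])
    have him : Finset.univ.image (fun j => (e j : Fin n ⊕ Fin n)) = S := by
      ext x
      simp only [Finset.mem_image, Finset.mem_univ, true_and]
      constructor
      · rintro ⟨j, rfl⟩
        exact (e j).2
      · intro hx
        exact ⟨e.symm ⟨x, hx⟩, by simp⟩
    refine ⟨fun j => e j, Subtype.val_injective.comp e.injective, him, ?_⟩
    rw [det_ne_iff_aux]
    intro v hv
    refine h v fun x hx => ?_
    simpa using hv (e.symm ⟨x, hx⟩)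

open Matrix in
lemma colDet_iff_aux {k n : ℕ} (C : Matrix (Fin k) (Fin n) ℝ) (T : Finset (Fin n)) :
    colDet C T ≠ 0 ↔ T.card = k ∧ ∀ v : Fin k → ℝ, (∀ x ∈ T, (v ᵥ* C) x = 0) → v = 0 := by
  unfold colDet
  split_ifs with h
  · rw [det_ne_iff_aux C (fun j => ((T.orderIsoOfFin h j : T) : Fin n))]
    simp only [h, true_and]
    refine forall_congr' fun v => imp_congr_left ⟨fun hv x hx => ?_, fun hv j => hv _ (Subtype.prop _)⟩
    simpa using hv ((T.orderIsoOfFin h).symm ⟨x, hx⟩)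
  · simp [h]

open Matrix in
lemma colDet_mulVec_aux {k n : ℕ} (C : Matrix (Fin k) (Fin n) ℝ) (T : Finset (Fin n))
    (hT : colDet C T ≠ 0) (w : Fin n → ℝ) (hw : ∀ i ∉ T, w i = 0) (hC : C *ᵥ w = 0) : w = 0 := by
  unfold colDet at hT
  split_ifs at hT with h
  · have h0 := mt Matrix.exists_mulVec_eq_zero_iff.1 hT
    simp only [not_exists, not_and] at h0
    have h1 : (fun j => w ((T.orderIsoOfFin h j : T) : Fin n)) = 0 := by
      by_contra hne
      refine h0 _ hne ?_
      ext r
      have hr := congrFun hC r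
      simp only [Matrix.mulVec, dotProduct, Pi.zero_apply, Matrix.of_apply] at hr ⊢
      rw [← hr]
      refine ((T.orderIsoOfFin h).toEquiv.sum_comp (fun x : T => C r x * w x)).trans ?_
      refine (Finset.sum_coe_sort T (fun x => C r x * w x)).trans ?_
      exact Finset.sum_subset (Finset.subset_univ _) fun x _ hx => by simp [hw x hx]
    ext i
    by_cases hi : i ∈ T
    · simpa using congrFun h1 ((T.orderIsoOfFin h).symm ⟨i, hi⟩)
    · exact hw i hi
  · exact absurd rfl hT

open Matrix in
lemma card_ge_aux {k n : ℕ} (C : Matrix (Fin k) (Fin n) ℝ) (T : Finset (Fin n))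
    (h : ∀ v : Fin k → ℝ, (∀ x ∈ T, (v ᵥ* C) x = 0) → v = 0) : k ≤ T.card := by
  let f : (Fin k → ℝ) →ₗ[ℝ] (T → ℝ) := (LinearMap.funLeft ℝ ℝ (Subtype.val : T → Fin n)) ∘ₗ C.vecMulLinear
  have hf : Function.Injective f := by
    rw [injective_iff_map_eq_zero]
    intro v hv
    exact h v fun x hx => congrFun hv ⟨x, hx⟩
  simpa using LinearMap.finrank_le_finrank_of_injective hf

open Matrix in
lemma rank_inj_aux {k n : ℕ} (C : Matrix (Fin k) (Fin n) ℝ) (h : C.rank = k) (v : Fin k → ℝ)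
    (hv : v ᵥ* C = 0) : v = 0 := by
  have hl : LinearIndependent ℝ C.row := by
    rw [linearIndependent_iff_card_eq_finrank_span, Set.finrank, ← Matrix.rank_eq_finrank_span_row, h]
    simp
  rw [← Matrix.vecMul_injective_iff] at hl
  exact hl (by simpa using hv)

/-- Let `B` be a `k × n` real matrix of rank `k` and `D` an `(n−k) × n` real matrix
of rank `n−k` with `B·Dᵗ = 0`.  Then the `n × 2n` block matrix `((B, 0), (0, D))`
(left block columns indexed by `I`, right block columns by `I*`) has totally
isotropic row space with respect to the standard symmetric hyperbolic form on
`ℝ^{2n}`, and the admissible `n`-subsets of `J` indexing its nonzero `n × n` minors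
are exactly the sets `S ∪ (I \ S)*` where `S` ranges over the bases of the matroid
represented by `B`. -/
theorem classical_embedding_representation {n k : ℕ}
    (B : Matrix (Fin k) (Fin n) ℝ) (D : Matrix (Fin (n - k)) (Fin n) ℝ)
    (hk : k ≤ n) (hB : B.rank = k) (hD : D.rank = n - k)
    (hBD : B * D.transpose = 0) :
    (∀ r s : Fin k ⊕ Fin (n - k), ∑ i : Fin n,
      ((Matrix.fromBlocks B 0 0 D) r (Sum.inl i) *
          (Matrix.fromBlocks B 0 0 D) s (Sum.inr i) +
        (Matrix.fromBlocks B 0 0 D) r (Sum.inr i) *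
          (Matrix.fromBlocks B 0 0 D) s (Sum.inl i)) = 0) ∧
    (∀ S : Finset (Fin n ⊕ Fin n),
      (S.card = n ∧ JAdmissible S ∧ HasNonzeroMinor (Matrix.fromBlocks B 0 0 D) S) ↔
      ∃ T : Finset (Fin n), colDet B T ≠ 0 ∧
        S = T.image Sum.inl ∪ Tᶜ.image Sum.inr) := by
  have hcol : ∀ (a : Fin k → ℝ) (b : Fin (n - k) → ℝ), Matrix.vecMul (Sum.elim a b)
      (Matrix.fromBlocks B 0 0 D) = Sum.elim (Matrix.vecMul a B) (Matrix.vecMul b D) := by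
    intro a b
    rw [Matrix.vecMul_fromBlocks]
    simp
  have hBD' : ∀ r s, ∑ i, B r i * D s i = 0 := fun r s => by
    have := congrFun (congrFun hBD r) s
    simpa [Matrix.mul_apply] using this
  have hcardm : Fintype.card (Fin k ⊕ Fin (n - k)) = n := by simp; omega
  refine ⟨?_, ?_⟩
  · rintro (r | r) (s | s)
    · simp
    · simpa using hBD' r s
    · simpa [mul_comm] using hBD' s r
    · simp
  intro S
  constructor
  · rintro ⟨hc, hadm, hm⟩
    rw [hasNonzeroMinor_iff_aux _ _ (by rw [hc, hcardm])] at hm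
    let T : Finset (Fin n) := Finset.univ.filter fun i => Sum.inl i ∈ S
    have hsub : S ⊆ T.image Sum.inl ∪ Tᶜ.image Sum.inr := by
      rintro (i | i) hx
      · simp [T, hx]
      · have := hadm _ hx
        simpa [T] using this
    have hcard : (T.image (Sum.inl : _ → Fin n ⊕ Fin n) ∪ Tᶜ.image Sum.inr).card ≤ n := by
      refine (Finset.card_union_le _ _).trans ?_
      refine (Nat.add_le_add Finset.card_image_le Finset.card_image_le).trans ?_
      rw [Finset.card_add_card_compl]
      simp
    have hS := Finset.eq_of_subset_of_card_le hsub (by rw [hc]; exact hcard)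
    have ha : ∀ v : Fin k → ℝ, (∀ x ∈ T, (Matrix.vecMul v B) x = 0) → v = 0 := by
      intro v hv
      have := hm (Sum.elim v 0) (by
        rw [hcol, hS]
        rintro (i | i) hx
        · exact hv i (by simpa using hx)
        · simp)
      ext j
      exact congrFun this (Sum.inl j)
    have hb : ∀ v : Fin (n - k) → ℝ, (∀ x ∈ Tᶜ, (Matrix.vecMul v D) x = 0) → v = 0 := by
      intro v hv
      have := hm (Sum.elim 0 v) (by
        rw [hcol, hS]
        rintro (i | i) hx
        · simp
        · exact hv i (by simpa using hx))
      ext j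
      exact congrFun this (Sum.inr j)
    have h1 := card_ge_aux B T ha
    have h2 := card_ge_aux D Tᶜ hb
    have h3 := Finset.card_add_card_compl T
    rw [Fintype.card_fin] at h3
    exact ⟨T, (colDet_iff_aux B T).2 ⟨by omega, ha⟩, hS⟩
  · rintro ⟨T, hT, rfl⟩
    have hc : (T.image (Sum.inl : _ → Fin n ⊕ Fin n) ∪ Tᶜ.image Sum.inr).card = n := by
      rw [Finset.card_union_of_disjoint, Finset.card_image_of_injective _ Sum.inl_injective,
        Finset.card_image_of_injective _ Sum.inr_injective, Finset.card_add_card_compl,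
        Fintype.card_fin]
      rw [Finset.disjoint_left]
      rintro (i | i) <;> simp
    refine ⟨hc, ?_, ?_⟩
    · rintro (i | i) <;> simp
    rw [hasNonzeroMinor_iff_aux _ _ (by rw [hc, hcardm])]
    intro v hv
    obtain ⟨a, b, rfl⟩ : ∃ a b, v = Sum.elim a b :=
      ⟨v ∘ Sum.inl, v ∘ Sum.inr, (Sum.elim_comp_inl_inr v).symm⟩
    rw [hcol] at hv
    have ha : a = 0 := ((colDet_iff_aux B T).1 hT).2 a fun x hx => by
      simpa using hv (Sum.inl x) (by simpa using hx)
    have hb : b = 0 := by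
      apply rank_inj_aux D hD
      refine colDet_mulVec_aux B T hT _ (fun i hi => ?_) ?_
      · simpa using hv (Sum.inr i) (by simpa using hi)
      · rw [← Matrix.mulVec_transpose, Matrix.mulVec_mulVec, hBD, Matrix.zero_mulVec]
    subst ha hb
    ext (i | i) <;> rfl
end
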